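/- Let k ∈ (0,1) and suppose p and q are coprime positive integers with 4(k⁴ − k² + 1) = p/q. Then for every n ∈ ℕ there exists an integer a with q^n · I_{2n}^+ = a and a ≡ (4p)^n (mod 10). -/

import Mathlib

open MeasureTheory Real

/-- The complete elliptic integral of the first kind `K(k)`. -/
noncomputable def ellipticK (k : ℝ) : ℝ :=
  ∫ θ in (0 : ℝ)..(π / 2), (1 - k ^ 2 * Real.sin θ ^ 2) ^ (-(1 / 2) : ℝ)

/-- Kuznetsov's moment integral `I_n^+`, realizing
`(1/2)∫_ℝ x^n dx/(cos(√x K) + cosh(√x K'))` with `√x = i√(−x)` for `x < 0`. -/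
noncomputable def Iplus (k : ℝ) (n : ℕ) : ℝ :=
  (1 / 2) * (∫ x in Set.Ioi (0 : ℝ), x ^ n /
      (Real.cos (ellipticK k * Real.sqrt x) +
        Real.cosh (ellipticK (Real.sqrt (1 - k ^ 2)) * Real.sqrt x)))
  + ((-1 : ℝ) ^ n / 2) * (∫ x in Set.Ioi (0 : ℝ), x ^ n /
      (Real.cosh (ellipticK k * Real.sqrt x) +
        Real.cos (ellipticK (Real.sqrt (1 - k ^ 2)) * Real.sqrt x)))

/-- Kuznetsov's moment integral `I_n^−`, realizing
`∫_ℝ x^{n+1} dx/(cos(√x K) − cosh(√x K'))` with `√x = i√(−x)` for `x < 0`. -/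
noncomputable def Iminus (k : ℝ) (n : ℕ) : ℝ :=
  (∫ x in Set.Ioi (0 : ℝ), x ^ (n + 1) /
      (Real.cos (ellipticK k * Real.sqrt x) -
        Real.cosh (ellipticK (Real.sqrt (1 - k ^ 2)) * Real.sqrt x)))
  + (-1 : ℝ) ^ (n + 1) * (∫ x in Set.Ioi (0 : ℝ), x ^ (n + 1) /
      (Real.cosh (ellipticK k * Real.sqrt x) -
        Real.cos (ellipticK (Real.sqrt (1 - k ^ 2)) * Real.sqrt x)))

/-!
Write `K = K(k)`, `L = K'`, `α = π / (K - iL)`, `κ = α K`, and consider the elliptic function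
`F(u) = -α ∑_{l ∈ ℤ} 1 / sin (α u - (2l+1) κ)` (`momentGen`). The theorem concerns the Taylor
coefficients of `F` at `0`, and rests on three facts.

*The moments are Taylor coefficients.* After `x = s²`, the moment `I_N⁺` is the integral of
`s^(2N+1) / (cos Ks + cosh Ls)` along the boundary of the first quadrant. The residue theorem turns
it into a sum over the poles `(2m+1) α`, and the Fourier expansion of `F` has the same terms. Hence
`F^(2N+1)(0) = (-1)^N I_N⁺`, while the even derivatives vanish.

*`F` solves an explicit differential equation.* For some constant `b` the defect `F'' - b F - 2 F³`
is entire and doubly periodic up to sign, hence constant by Liouville, hence zero. On the real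
segment `[0, K)` the function `F` is real and blows up at `K`; `-i F(i ·)` is real on `[0, L)` and
blows up at `L`. An increasing solution of `y' ^ 2 = a⁴ + b y² + y⁴` with `y(0) = 0` and
`b = 2 (1 - 2 k²) a²` blows up exactly at `K(k) / a`, and the blow-up time is monotone in `b`.
Rotating by `i` replaces `b` by `-b` and `k` by `k'`, so the two known blow-up times leave only
`F'(0) = 1` and `b = 2 (1 - 2 k²)`. Therefore `F' ^ 2 = 1 + 2 λ F² + F⁴` with `λ = 1 - 2 k²`. No
identification of `F` with a Jacobi elliptic function is needed.

*The recursion modulo 10.* The hypothesis on `k` reads `q λ² = p - 3q`. The equation for `F` gives a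
linear recursion, polynomial in `λ` with integer coefficients, for the odd derivatives at `0` of the
odd powers `F^(2i+1)`. Two steps of it multiply `q^n F^(4n+1)(0)` by `4p` up to multiples of `10`.
-/

open Filter Topology Set
open Complex (I)

section EllipticIntegral

variable {k : ℝ}

theorem one_sub_sq_mul_sin_sq_pos (hk : k ^ 2 < 1) (θ : ℝ) : 0 < 1 - k ^ 2 * sin θ ^ 2 := by
  nlinarith [sin_sq_le_one θ, sq_nonneg k]

theorem continuous_ellipticK_integrand (hk : k ^ 2 < 1) :
    Continuous fun θ : ℝ => (1 - k ^ 2 * sin θ ^ 2) ^ (-(1 / 2) : ℝ) :=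
  Continuous.rpow_const (by fun_prop) fun θ => Or.inl (one_sub_sq_mul_sin_sq_pos hk θ).ne'

theorem complementary_modulus_sq_lt_one (hk : k ≠ 0) : √(1 - k ^ 2) ^ 2 < 1 := by
  rw [sq_lt_one_iff₀ (sqrt_nonneg _), sqrt_lt' one_pos]
  linarith [pow_pos (abs_pos.2 hk) 2, sq_abs k]

theorem ellipticK_pos (hk : k ^ 2 < 1) : 0 < ellipticK k :=
  intervalIntegral.intervalIntegral_pos_of_pos
    ((continuous_ellipticK_integrand hk).intervalIntegrable _ _)
    (fun θ => rpow_pos_of_pos (one_sub_sq_mul_sin_sq_pos hk θ) _) (by positivity)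

theorem integral_zero_pi_ellipticK_integrand (hk : k ^ 2 < 1) :
    ∫ θ in (0 : ℝ)..π, (1 - k ^ 2 * sin θ ^ 2) ^ (-(1 / 2) : ℝ) = 2 * ellipticK k := by
  have hint := fun a b => (continuous_ellipticK_integrand hk).intervalIntegrable (μ := volume) a b
  have hsymm : ∫ θ in (π / 2)..π, (1 - k ^ 2 * sin θ ^ 2) ^ (-(1 / 2) : ℝ) = ellipticK k := by
    have h := intervalIntegral.integral_comp_sub_left (a := 0) (b := π / 2)
      (fun θ => (1 - k ^ 2 * sin θ ^ 2) ^ (-(1 / 2) : ℝ)) π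
    simp only [sin_pi_sub, sub_zero, sub_half] at h
    exact h.symm
  rw [← intervalIntegral.integral_add_adjacent_intervals (hint 0 (π / 2)) (hint (π / 2) π), hsymm,
    ← ellipticK, two_mul]

/-- The quartic `1 + 2 (1 - 2 k²) z² + z⁴`, whose reciprocal square root is the integrand of `K(k)`
after the substitution `z = tan (θ / 2)`. -/
def quartic (k z : ℝ) : ℝ := 1 + 2 * (1 - 2 * k ^ 2) * z ^ 2 + z ^ 4

theorem quartic_pos (hk : k ^ 2 < 1) (z : ℝ) : 0 < quartic k z := by
  have hsum : quartic k z = (1 - z ^ 2) ^ 2 + 4 * (1 - k ^ 2) * z ^ 2 := by rw [quartic]; ring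
  rcases eq_or_ne z 0 with rfl | hz
  · norm_num [quartic]
  · have : 0 < 1 - k ^ 2 := sub_pos.2 hk
    rw [hsum]
    positivity

theorem one_sub_sq_mul_sin_two_arctan_sq (k z : ℝ) :
    1 - k ^ 2 * sin (2 * arctan z) ^ 2 = quartic k z / (1 + z ^ 2) ^ 2 := by
  have hz : (0 : ℝ) < 1 + z ^ 2 := by positivity
  have hsin : sin (2 * arctan z) = 2 * z / (1 + z ^ 2) := by
    rw [sin_two_mul, sin_arctan, cos_arctan, mul_assoc, div_mul_div_comm, mul_one,
      mul_self_sqrt hz.le, mul_div_assoc]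
  rw [hsin, quartic]
  field_simp
  ring

/-- The integral `∫₀^z dt / √(1 + 2 (1 - 2 k²) t² + t⁴)`, encoded through the substitution
`t = tan (θ / 2)` as half of an incomplete elliptic integral of the first kind. It is the inverse
function of the solution of `y' ^ 2 = quartic k y`, `y 0 = 0`. -/
noncomputable def quarticIntegral (k z : ℝ) : ℝ :=
  (1 / 2) * ∫ θ in (0 : ℝ)..(2 * arctan z), (1 - k ^ 2 * sin θ ^ 2) ^ (-(1 / 2) : ℝ)

theorem quarticIntegral_zero (k : ℝ) : quarticIntegral k 0 = 0 := by simp [quarticIntegral]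

theorem hasDerivAt_quarticIntegral (hk : k ^ 2 < 1) (z : ℝ) :
    HasDerivAt (quarticIntegral k) (√(quartic k z))⁻¹ z := by
  have hc := continuous_ellipticK_integrand hk
  have hint : HasDerivAt (fun φ => ∫ θ in (0 : ℝ)..φ, (1 - k ^ 2 * sin θ ^ 2) ^ (-(1 / 2) : ℝ))
      _ (2 * arctan z) :=
    intervalIntegral.integral_hasDerivAt_right (hc.intervalIntegrable _ _)
      (hc.stronglyMeasurableAtFilter _ _) hc.continuousAt
  refine ((hint.comp z ((hasDerivAt_arctan z).const_mul 2)).const_mul (1 / 2)).congr_deriv ?_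
  have hz : (0 : ℝ) < 1 + z ^ 2 := by positivity
  have hQ := quartic_pos hk z
  have hQ' : √(quartic k z) ≠ 0 := (sqrt_pos.2 hQ).ne'
  rw [one_sub_sq_mul_sin_two_arctan_sq, rpow_neg (by positivity), ← sqrt_eq_rpow,
    sqrt_div hQ.le, sqrt_sq hz.le]
  field_simp

theorem tendsto_quarticIntegral_atTop (hk : k ^ 2 < 1) :
    Tendsto (quarticIntegral k) atTop (𝓝 (ellipticK k)) := by
  have hcont : Continuous fun φ => (1 / 2) * ∫ θ in (0 : ℝ)..(2 * φ),
      (1 - k ^ 2 * sin θ ^ 2) ^ (-(1 / 2) : ℝ) :=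
    continuous_const.mul ((intervalIntegral.continuous_primitive
      (continuous_ellipticK_integrand hk).intervalIntegrable 0).comp (continuous_const_mul 2))
  have h := (hcont.tendsto (π / 2)).comp (tendsto_arctan_atTop.mono_right nhdsWithin_le_nhds)
  rwa [mul_div_cancel₀ _ two_ne_zero, integral_zero_pi_ellipticK_integrand hk, ← mul_assoc,
    one_div_mul_cancel two_ne_zero, one_mul] at h

end EllipticIntegral

section Comparison

variable {k a T : ℝ} {y y' : ℝ → ℝ}

theorem ellipticK_le_of_deriv_le (hk : k ^ 2 < 1) (hT : 0 < T)
    (hy : ∀ x ∈ Ico 0 T, HasDerivAt y (y' x) x) (hy0 : y 0 = 0) (hlim : Tendsto y (𝓝[<] T) atTop)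
    (hle : ∀ x ∈ Ico 0 T, y' x ≤ a * √(quartic k (y x))) : ellipticK k ≤ a * T := by
  have hderiv : ∀ x ∈ Ico 0 T, HasDerivAt (fun x => a * x - quarticIntegral k (y x))
      (a * 1 - (√(quartic k (y x)))⁻¹ * y' x) x := fun x hx =>
    ((hasDerivAt_id x).const_mul a).sub ((hasDerivAt_quarticIntegral hk (y x)).comp x (hy x hx))
  have hmono : MonotoneOn (fun x => a * x - quarticIntegral k (y x)) (Ico 0 T) := by
    refine monotoneOn_of_hasDerivWithinAt_nonneg (convex_Ico 0 T)
      (fun x hx => (hderiv x hx).continuousAt.continuousWithinAt)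
      (fun x hx => (hderiv x (interior_subset hx)).hasDerivWithinAt) fun x hx => ?_
    rw [mul_one, sub_nonneg, inv_mul_le_iff₀ (sqrt_pos.2 (quartic_pos hk (y x))), mul_comm]
    exact hle x (interior_subset hx)
  have hlim' : Tendsto (fun x => a * x - quarticIntegral k (y x)) (𝓝[<] T)
      (𝓝 (a * T - ellipticK k)) :=
    ((tendsto_id.mono_left nhdsWithin_le_nhds).const_mul a).sub
      ((tendsto_quarticIntegral_atTop hk).comp hlim)
  refine sub_nonneg.1 (ge_of_tendsto hlim' ?_)
  filter_upwards [Ioo_mem_nhdsLT hT] with x hx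
  simpa [hy0, quarticIntegral_zero] using
    hmono (left_mem_Ico.2 hT) (Ioo_subset_Ico_self hx) hx.1.le

theorem mul_sub_le_ellipticK_sub (hk : k ^ 2 < 1)
    (hy : ∀ x ∈ Ico 0 T, HasDerivAt y (y' x) x) (hlim : Tendsto y (𝓝[<] T) atTop)
    (hle : ∀ x ∈ Ico 0 T, a * √(quartic k (y x)) ≤ y' x) {x : ℝ} (hx : x ∈ Ico 0 T) :
    a * (T - x) ≤ ellipticK k - quarticIntegral k (y x) := by
  have hderiv : ∀ x ∈ Ico 0 T, HasDerivAt (fun x => quarticIntegral k (y x) - a * x)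
      ((√(quartic k (y x)))⁻¹ * y' x - a * 1) x := fun x hx =>
    ((hasDerivAt_quarticIntegral hk (y x)).comp x (hy x hx)).sub ((hasDerivAt_id x).const_mul a)
  have hmono : MonotoneOn (fun x => quarticIntegral k (y x) - a * x) (Ico 0 T) := by
    refine monotoneOn_of_hasDerivWithinAt_nonneg (convex_Ico 0 T)
      (fun x hx => (hderiv x hx).continuousAt.continuousWithinAt)
      (fun x hx => (hderiv x (interior_subset hx)).hasDerivWithinAt) fun x hx => ?_
    rw [mul_one, sub_nonneg, le_inv_mul_iff₀ (sqrt_pos.2 (quartic_pos hk (y x))), mul_comm]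
    exact hle x (interior_subset hx)
  have hlim' : Tendsto (fun x => quarticIntegral k (y x) - a * x) (𝓝[<] T)
      (𝓝 (ellipticK k - a * T)) :=
    ((tendsto_quarticIntegral_atTop hk).comp hlim).sub
      ((tendsto_id.mono_left nhdsWithin_le_nhds).const_mul a)
  have := ge_of_tendsto hlim' <| by
    filter_upwards [Ioo_mem_nhdsLT hx.2] with t ht
    exact hmono hx ⟨hx.1.trans ht.1.le, ht.2⟩ ht.1.le
  linarith

theorem mul_lt_quarticIntegral_of_lt_deriv (hk : k ^ 2 < 1)
    (hy : ∀ x ∈ Ico 0 T, HasDerivAt y (y' x) x) (hy0 : y 0 = 0)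
    (hlt : ∀ x ∈ Ioo 0 T, a * √(quartic k (y x)) < y' x) {x : ℝ} (hx : x ∈ Ioo 0 T) :
    a * x < quarticIntegral k (y x) := by
  have hderiv : ∀ x ∈ Ico 0 T, HasDerivAt (fun x => quarticIntegral k (y x) - a * x)
      ((√(quartic k (y x)))⁻¹ * y' x - a * 1) x := fun x hx =>
    ((hasDerivAt_quarticIntegral hk (y x)).comp x (hy x hx)).sub ((hasDerivAt_id x).const_mul a)
  have hmono : StrictMonoOn (fun x => quarticIntegral k (y x) - a * x) (Ico 0 T) := by
    refine strictMonoOn_of_hasDerivWithinAt_pos (convex_Ico 0 T)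
      (fun x hx => (hderiv x hx).continuousAt.continuousWithinAt)
      (fun x hx => (hderiv x (interior_subset hx)).hasDerivWithinAt) fun x hx => ?_
    rw [interior_Ico] at hx
    rw [mul_one, sub_pos, lt_inv_mul_iff₀ (sqrt_pos.2 (quartic_pos hk (y x))), mul_comm]
    exact hlt x hx
  simpa [hy0, quarticIntegral_zero] using
    hmono (left_mem_Ico.2 (hx.1.trans hx.2)) (Ioo_subset_Ico_self hx) hx.1

end Comparison

/-- `y`, with derivative `y'`, solves `y' ^ 2 = y'(0) ^ 2 + b y² + y⁴` on `[0, T)`, starts at `0`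
with positive slope, and tends to infinity at `T`. -/
structure IsBlowup (b T : ℝ) (y y' : ℝ → ℝ) : Prop where
  hasDerivAt : ∀ x ∈ Ico 0 T, HasDerivAt y (y' x) x
  continuousOn_deriv : ContinuousOn y' (Ico 0 T)
  map_zero : y 0 = 0
  deriv_zero_pos : 0 < y' 0
  energy : ∀ x ∈ Ico 0 T, y' x ^ 2 = y' 0 ^ 2 + b * y x ^ 2 + y x ^ 4
  tendsto_atTop : Tendsto y (𝓝[<] T) atTop

namespace IsBlowup

variable {k a b T : ℝ} {y y' : ℝ → ℝ}

theorem hasDerivAt_div (h : IsBlowup b T y y') (a : ℝ) :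
    ∀ x ∈ Ico 0 T, HasDerivAt (fun x => y x / a) (y' x / a) x :=
  fun x hx => (h.hasDerivAt x hx).div_const a

theorem div_map_zero (h : IsBlowup b T y y') (a : ℝ) : y 0 / a = 0 := by rw [h.map_zero, zero_div]

/-- For `y' 0 = a²` the quotient `y / a` is to be compared with the solution of
`z' = a √(quartic k z)`. -/
theorem mul_sqrt_quartic_sq (hk : k ^ 2 < 1) (ha : 0 < a) (h : IsBlowup b T y y')
    (hslope : y' 0 = a ^ 2) {x : ℝ} (hx : x ∈ Ico 0 T) :
    (a * √(quartic k (y x / a))) ^ 2 =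
      (y' x / a) ^ 2 + (2 * (1 - 2 * k ^ 2) - b / a ^ 2) * (y x) ^ 2 := by
  rw [mul_pow, sq_sqrt (quartic_pos hk _).le, div_pow (y' x), h.energy x hx, hslope, quartic]
  field_simp
  ring

theorem ellipticK_le (hk : k ^ 2 < 1) (ha : 0 < a) (hT : 0 < T) (h : IsBlowup b T y y')
    (hslope : y' 0 = a ^ 2) (hb : b / a ^ 2 ≤ 2 * (1 - 2 * k ^ 2)) : ellipticK k ≤ a * T := by
  refine ellipticK_le_of_deriv_le hk hT (h.hasDerivAt_div a) (h.div_map_zero a)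
    (h.tendsto_atTop.atTop_div_const ha) fun x hx => ?_
  refine le_of_sq_le_sq ?_ (by positivity)
  rw [h.mul_sqrt_quartic_sq hk ha hslope hx, le_add_iff_nonneg_right]
  have := sub_nonneg.2 hb
  positivity

theorem deriv_pos (hk : k ^ 2 < 1) (ha : 0 < a) (h : IsBlowup b T y y') (hslope : y' 0 = a ^ 2)
    (hb : 2 * (1 - 2 * k ^ 2) ≤ b / a ^ 2) {x : ℝ} (hx : x ∈ Ico 0 T) : 0 < y' x := by
  have hne : ∀ t ∈ Ico 0 T, y' t ≠ 0 := by
    intro t ht h0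
    have hQ := sqrt_pos.2 (quartic_pos hk (y t / a))
    have hE := h.mul_sqrt_quartic_sq hk ha hslope ht
    rw [h0, zero_div] at hE
    nlinarith [mul_nonneg (sub_nonneg.2 hb) (sq_nonneg (y t)), pow_pos (mul_pos ha hQ) 2]
  by_contra hneg
  obtain ⟨t, ht, ht0⟩ := intermediate_value_Icc' hx.1
    (h.continuousOn_deriv.mono (Icc_subset_Ico_right hx.2)) ⟨not_lt.1 hneg, h.deriv_zero_pos.le⟩
  exact hne t ⟨ht.1, ht.2.trans_lt hx.2⟩ ht0

theorem pos (hk : k ^ 2 < 1) (ha : 0 < a) (h : IsBlowup b T y y') (hslope : y' 0 = a ^ 2)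
    (hb : 2 * (1 - 2 * k ^ 2) ≤ b / a ^ 2) {x : ℝ} (hx : x ∈ Ioo 0 T) : 0 < y x := by
  have hmono : StrictMonoOn y (Ico 0 T) :=
    strictMonoOn_of_hasDerivWithinAt_pos (convex_Ico 0 T)
      (fun t ht => (h.hasDerivAt t ht).continuousAt.continuousWithinAt)
      (fun t ht => (h.hasDerivAt t (interior_subset ht)).hasDerivWithinAt)
      fun t ht => h.deriv_pos hk ha hslope hb (interior_subset ht)
  rw [← h.map_zero]
  exact hmono (left_mem_Ico.2 (hx.1.trans hx.2)) (Ioo_subset_Ico_self hx) hx.1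

theorem mul_sub_le (hk : k ^ 2 < 1) (ha : 0 < a) (h : IsBlowup b T y y') (hslope : y' 0 = a ^ 2)
    (hb : 2 * (1 - 2 * k ^ 2) ≤ b / a ^ 2) {x : ℝ} (hx : x ∈ Ico 0 T) :
    a * (T - x) ≤ ellipticK k - quarticIntegral k (y x / a) := by
  refine mul_sub_le_ellipticK_sub (y := fun x => y x / a) hk (h.hasDerivAt_div a)
    (h.tendsto_atTop.atTop_div_const ha) (fun t ht => ?_) hx
  have hy' := h.deriv_pos hk ha hslope hb ht
  refine le_of_sq_le_sq ?_ (by positivity)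
  rw [h.mul_sqrt_quartic_sq hk ha hslope ht, add_le_iff_nonpos_right]
  exact mul_nonpos_of_nonpos_of_nonneg (sub_nonpos.2 hb) (sq_nonneg _)

theorem mul_le_ellipticK (hk : k ^ 2 < 1) (ha : 0 < a) (hT : 0 < T) (h : IsBlowup b T y y')
    (hslope : y' 0 = a ^ 2) (hb : 2 * (1 - 2 * k ^ 2) ≤ b / a ^ 2) : a * T ≤ ellipticK k := by
  simpa [h.map_zero, quarticIntegral_zero] using h.mul_sub_le hk ha hslope hb (left_mem_Ico.2 hT)

theorem mul_lt_ellipticK (hk : k ^ 2 < 1) (ha : 0 < a) (hT : 0 < T) (h : IsBlowup b T y y')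
    (hslope : y' 0 = a ^ 2) (hb : 2 * (1 - 2 * k ^ 2) < b / a ^ 2) : a * T < ellipticK k := by
  have hmem : T / 2 ∈ Ioo 0 T := ⟨half_pos hT, half_lt_self hT⟩
  have hhalf := mul_lt_quarticIntegral_of_lt_deriv (a := a) (y := fun x => y x / a) hk
    (h.hasDerivAt_div a) (h.div_map_zero a) (fun t ht => ?_) hmem
  · linarith [h.mul_sub_le hk ha hslope hb.le (Ioo_subset_Ico_self hmem)]
  have hy := h.pos hk ha hslope hb.le ht
  have hy' := h.deriv_pos hk ha hslope hb.le (Ioo_subset_Ico_self ht)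
  refine lt_of_pow_lt_pow_left₀ 2 (by positivity) ?_
  rw [h.mul_sqrt_quartic_sq hk ha hslope (Ioo_subset_Ico_self ht), add_lt_iff_neg_left]
  exact mul_neg_of_neg_of_pos (sub_neg.2 hb) (by positivity)

/-- If `b / y'(0)` were below `2 (1 - 2 k²)`, then `K ≤ a K` and `a K' < K'`, where `a² = y'(0)`;
if it were above, then `a K < K` and `K' ≤ a K'`. -/
theorem slope_eq_one_and_coeff_eq {z z' : ℝ → ℝ} (hk : k ∈ Ioo (0 : ℝ) 1)
    (hy : IsBlowup b (ellipticK k) y y') (hz : IsBlowup (-b) (ellipticK √(1 - k ^ 2)) z z')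
    (hslope : z' 0 = y' 0) : y' 0 = 1 ∧ b = 2 * (1 - 2 * k ^ 2) := by
  have hk2 : k ^ 2 < 1 := pow_lt_one₀ hk.1.le hk.2 two_ne_zero
  have hsq : √(1 - k ^ 2) ^ 2 = 1 - k ^ 2 := sq_sqrt (sub_nonneg.2 hk2.le)
  have hk2' := complementary_modulus_sq_lt_one hk.1.ne'
  have hK := ellipticK_pos hk2
  have hL := ellipticK_pos hk2'
  obtain ⟨a, ha, hya⟩ : ∃ a, 0 < a ∧ y' 0 = a ^ 2 :=
    ⟨√(y' 0), sqrt_pos.2 hy.deriv_zero_pos, (sq_sqrt hy.deriv_zero_pos.le).symm⟩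
  have hza : z' 0 = a ^ 2 := hslope.trans hya
  have hcoeff' : 2 * (1 - 2 * √(1 - k ^ 2) ^ 2) = -(2 * (1 - 2 * k ^ 2)) := by rw [hsq]; ring
  have hratio : b / a ^ 2 = 2 * (1 - 2 * k ^ 2) := by
    rcases lt_trichotomy (b / a ^ 2) (2 * (1 - 2 * k ^ 2)) with hlt | heq | hgt
    · have h1 := hy.ellipticK_le hk2 ha hK hya hlt.le
      have h2 := hz.mul_lt_ellipticK hk2' ha hL hza (by rw [hcoeff', neg_div]; linarith)
      nlinarith
    · exact heq
    · have h1 := hy.mul_lt_ellipticK hk2 ha hK hya hgt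
      have h2 := hz.ellipticK_le hk2' ha hL hza (by rw [hcoeff', neg_div]; linarith)
      nlinarith
  have ha1 : a = 1 := by
    have h1 := hy.ellipticK_le hk2 ha hK hya hratio.le
    have h2 := hy.mul_le_ellipticK hk2 ha hK hya hratio.ge
    nlinarith
  simpa [hya, ha1] using hratio

end IsBlowup

section OddPowers

variable {R : Type*} [CommRing R]

/-- The second derivative on odd powers: if `f' ^ 2 = 1 + 2 λ f² + f⁴` and `f'' = 2 λ f + 2 f³`,
then `(f ^ (2 i + 1))''` is `oddPowerStep λ (fun j => f ^ (2 j + 1)) i`. At `i = 0` the truncated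
index `i - 1` is harmless, as its coefficient vanishes. -/
def oddPowerStep (lam : R) (u : ℕ → R) (i : ℕ) : R :=
  (2 * i * (2 * i + 1)) • u (i - 1) + (2 * (2 * i + 1) ^ 2) • (lam * u i)
    + ((2 * i + 1) * (2 * i + 2)) • u (i + 1)

theorem oddPowerStep_mem {lam : R} {u : ℕ → R} {H : ℕ → AddSubgroup R}
    (hdiag : ∀ i, lam * u i ∈ H i) (hup : ∀ i, u i ∈ H (i + 1)) (hdown : ∀ i, u (i + 1) ∈ H i)
    (i : ℕ) : oddPowerStep lam u i ∈ H i := by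
  refine add_mem (add_mem ?_ (nsmul_mem (hdiag i) _)) (nsmul_mem (hdown i) _)
  cases i with
  | zero => simp
  | succ i => exact nsmul_mem (hup i) _

theorem oddPowerStep_const_mul (lam c : R) (u : ℕ → R) (i : ℕ) :
    oddPowerStep lam (fun j => c * u j) i = c * oddPowerStep lam u i := by
  simp only [oddPowerStep, mul_add, mul_smul_comm, mul_left_comm]

theorem oddPowerStep_oddPowerStep_zero (lam : R) (u : ℕ → R) :
    oddPowerStep lam (oddPowerStep lam u) 0 =
      (4 * lam ^ 2 + 12) * u 0 + 40 * (lam * u 1) + 24 * u 2 := by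
  simp only [oddPowerStep, nsmul_eq_mul]
  push_cast
  ring

/-- The divisors of the entries in even rows: `1` in even columns, `λ q` in odd ones. -/
def evenRowDivisor (lam : R) (q : ℤ) (i : ℕ) : R := if Even i then 1 else lam * q

/-- The divisors of the entries in odd rows: `λ` in even columns, `1` in odd ones. -/
def oddRowDivisor (lam : R) (i : ℕ) : R := if Even i then lam else 1

open AddSubgroup in
theorem oddPowerStep_mem_zmultiples {lam : R} {u d e : ℕ → R} (hu : ∀ i, u i ∈ zmultiples (d i))
    (hdiag : ∀ i, lam * d i ∈ zmultiples (e i)) (hup : ∀ i, d i ∈ zmultiples (e (i + 1)))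
    (hdown : ∀ i, d (i + 1) ∈ zmultiples (e i)) (i : ℕ) :
    oddPowerStep lam u i ∈ zmultiples (e i) := by
  refine oddPowerStep_mem (H := fun i => zmultiples (e i)) (fun i => ?_)
    (fun i => zmultiples_le_of_mem (hup i) (hu i))
    (fun i => zmultiples_le_of_mem (hdown i) (hu (i + 1))) i
  obtain ⟨m, hm⟩ := mem_zmultiples_iff.1 (hu i)
  rw [← hm, mul_smul_comm]
  exact zsmul_mem (hdiag i) m

variable {lam : R} {p q : ℤ} {u : ℕ → R}

open AddSubgroup in
theorem oddPowerStep_mem_oddRow (hlam : q * lam ^ 2 = p - 3 * q)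
    (hu : ∀ i, u i ∈ zmultiples (evenRowDivisor lam q i)) (i : ℕ) :
    oddPowerStep lam u i ∈ zmultiples (oddRowDivisor lam i) := by
  refine oddPowerStep_mem_zmultiples hu (fun i => ?_) (fun i => ?_) (fun i => ?_) i <;>
    by_cases hi : Even i <;>
    simp only [evenRowDivisor, oddRowDivisor, hi, Nat.even_add_one, not_true_eq_false,
      not_false_eq_true, if_true, if_false, mul_one, mem_zmultiples]
  · exact ⟨p - 3 * q, by push_cast [zsmul_eq_mul]; linear_combination -hlam⟩
  · exact ⟨q, by simp [mul_comm]⟩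
  · exact ⟨q, by simp [mul_comm]⟩

open AddSubgroup in
theorem mul_oddPowerStep_mem_evenRow (hlam : q * lam ^ 2 = p - 3 * q)
    (hu : ∀ i, u i ∈ zmultiples (oddRowDivisor lam i)) (i : ℕ) :
    q * oddPowerStep lam u i ∈ zmultiples (evenRowDivisor lam q i) := by
  rw [← oddPowerStep_const_mul]
  refine oddPowerStep_mem_zmultiples (d := fun i => q * oddRowDivisor lam i) (fun i => ?_)
    (fun i => ?_) (fun i => ?_) (fun i => ?_) i
  · obtain ⟨m, hm⟩ := mem_zmultiples_iff.1 (hu i)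
    exact ⟨m, by simp only [← hm, mul_smul_comm]⟩
  all_goals
    by_cases hi : Even i <;>
    simp only [evenRowDivisor, oddRowDivisor, hi, Nat.even_add_one, not_true_eq_false,
      not_false_eq_true, if_true, if_false, mul_one, mem_zmultiples, mul_comm _ lam]
  · exact ⟨p - 3 * q, by push_cast [zsmul_eq_mul]; linear_combination -hlam⟩
  · exact ⟨q, by simp⟩
  · exact ⟨q, by simp⟩

theorem exists_mul_oddPowerStep_two (hlam : q * lam ^ 2 = p - 3 * q)
    (hu : ∀ i, u i ∈ AddSubgroup.zmultiples (oddRowDivisor lam i)) :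
    ∃ m : ℤ, q * oddPowerStep lam u 2 = 10 * m := by
  obtain ⟨m₁, h₁⟩ := hu 1
  obtain ⟨m₂, h₂⟩ := hu 2
  obtain ⟨m₃, h₃⟩ := hu 3
  simp only [oddRowDivisor, Nat.not_even_one, even_two, if_false, if_true,
    show ¬Even 3 by decide, zsmul_eq_mul, mul_one] at h₁ h₂ h₃
  refine ⟨2 * q * m₁ + 5 * (p - 3 * q) * m₂ + 3 * q * m₃, ?_⟩
  simp only [oddPowerStep, ← h₁, ← h₂, ← h₃, nsmul_eq_mul]
  push_cast
  linear_combination 50 * m₂ * hlam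

/-- The invariant satisfied by the row `i ↦ q ^ n (f ^ (2 i + 1))^(4 n + 1)(0)`: the divisibilities
of an even row, the residue of its entry `0` modulo `10`, and the divisibility of its entry `2` by
`10`, which keeps that entry out of the residue of the next row. -/
structure IsRowModTen (lam : R) (p q : ℤ) (n : ℕ) (u : ℕ → R) : Prop where
  mem : ∀ i, u i ∈ AddSubgroup.zmultiples (evenRowDivisor lam q i)
  zero : ∃ a : ℤ, u 0 = a ∧ a ≡ (4 * p) ^ n [ZMOD 10]
  two : ∃ m : ℤ, u 2 = 10 * m

theorem IsRowModTen.step (hlam : q * lam ^ 2 = p - 3 * q) {n : ℕ} (h : IsRowModTen lam p q n u) :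
    IsRowModTen lam p q (n + 1) fun i => q * oddPowerStep lam (oddPowerStep lam u) i where
  mem := mul_oddPowerStep_mem_evenRow hlam (oddPowerStep_mem_oddRow hlam h.mem)
  two := exists_mul_oddPowerStep_two hlam (oddPowerStep_mem_oddRow hlam h.mem)
  zero := by
    obtain ⟨a, ha, hmod⟩ := h.zero
    obtain ⟨m₁, h₁⟩ := h.mem 1
    obtain ⟨m₂, h₂⟩ := h.two
    simp only [evenRowDivisor, Nat.not_even_one, if_false, zsmul_eq_mul] at h₁
    refine ⟨4 * p * a + 10 * (4 * q * (p - 3 * q) * m₁ + 24 * q * m₂), ?_, ?_⟩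
    · rw [oddPowerStep_oddPowerStep_zero, ha, ← h₁, h₂]
      push_cast
      linear_combination (4 * a + 40 * q * m₁) * hlam
    · rw [pow_succ']
      exact (Int.modEq_iff_dvd.2 ⟨-(4 * q * (p - 3 * q) * m₁ + 24 * q * m₂), by ring⟩).trans
        (hmod.mul_left _)

end OddPowers

section IteratedDeriv

variable {f : ℂ → ℂ} {lam : ℂ}

theorem deriv_deriv_odd_pow {u : ℂ} (hf : AnalyticAt ℂ f u)
    (hode : deriv (deriv f) u = 2 * lam * f u + 2 * f u ^ 3)
    (henergy : deriv f u ^ 2 = 1 + 2 * lam * f u ^ 2 + f u ^ 4) (i : ℕ) :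
    deriv (deriv fun u => f u ^ (2 * i + 1)) u =
      oddPowerStep lam (fun j => f u ^ (2 * j + 1)) i := by
  have hderiv : deriv (fun u => f u ^ (2 * i + 1)) =ᶠ[𝓝 u]
      fun u => (2 * i + 1) * f u ^ (2 * i) * deriv f u := by
    filter_upwards [hf.eventually_analyticAt] with v hv
    simp [deriv_fun_pow hv.differentiableAt]
  rw [hderiv.deriv_eq, (((hf.differentiableAt.hasDerivAt.fun_pow (2 * i)).const_mul
    (2 * (i : ℂ) + 1)).fun_mul hf.deriv.differentiableAt.hasDerivAt).deriv, hode]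
  cases i with
  | zero =>
    simp only [oddPowerStep, nsmul_eq_mul]
    push_cast
    ring
  | succ i =>
    simp only [oddPowerStep, nsmul_eq_mul, add_tsub_cancel_right]
    rw [show 2 * (i + 1) - 1 = 2 * i + 1 by lia]
    push_cast
    linear_combination (2 * (i : ℂ) + 3) * (2 * i + 2) * f u ^ (2 * i + 1) * henergy

theorem iteratedDeriv_oddPowerStep {g : ℕ → ℂ → ℂ} {n : ℕ} {x : ℂ}
    (hg : ∀ i, ContDiffAt ℂ n (g i) x) (i : ℕ) :
    iteratedDeriv n (fun u => oddPowerStep lam (fun j => g j u) i) x =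
      oddPowerStep lam (fun j => iteratedDeriv n (g j) x) i := by
  simp only [oddPowerStep, nsmul_eq_mul]
  have hmul : ∀ (c : ℂ) j, ContDiffAt ℂ n (fun u => c * g j u) x := fun c j =>
    contDiffAt_const.mul (hg j)
  simp only [← mul_assoc]
  rw [iteratedDeriv_fun_add ((hmul _ _).add (hmul _ _)) (hmul _ _),
    iteratedDeriv_fun_add (hmul _ _) (hmul _ _)]
  simp only [iteratedDeriv_const_mul_field]

theorem iteratedDeriv_odd_pow_succ (hf : AnalyticAt ℂ f 0)
    (hode : ∀ᶠ u in 𝓝 0, deriv (deriv f) u = 2 * lam * f u + 2 * f u ^ 3)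
    (henergy : ∀ᶠ u in 𝓝 0, deriv f u ^ 2 = 1 + 2 * lam * f u ^ 2 + f u ^ 4) (n i : ℕ) :
    iteratedDeriv (n + 2) (fun u => f u ^ (2 * i + 1)) 0 =
      oddPowerStep lam (fun j => iteratedDeriv n (fun u => f u ^ (2 * j + 1)) 0) i := by
  rw [iteratedDeriv_succ', iteratedDeriv_succ',
    ← iteratedDeriv_oddPowerStep fun j => (hf.fun_pow (2 * j + 1)).contDiffAt]
  refine Filter.EventuallyEq.iteratedDeriv_eq n ?_
  filter_upwards [hf.eventually_analyticAt, hode, henergy] with u hu h₁ h₂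
  exact deriv_deriv_odd_pow hu h₁ h₂ i

theorem isRowModTen_iteratedDeriv (hf : AnalyticAt ℂ f 0) (h0 : f 0 = 0) (h1 : deriv f 0 = 1)
    (hode : ∀ᶠ u in 𝓝 0, deriv (deriv f) u = 2 * lam * f u + 2 * f u ^ 3)
    (henergy : ∀ᶠ u in 𝓝 0, deriv f u ^ 2 = 1 + 2 * lam * f u ^ 2 + f u ^ 4)
    {p q : ℤ} (hlam : q * lam ^ 2 = p - 3 * q) (n : ℕ) :
    IsRowModTen lam p q n fun i =>
      q ^ n * iteratedDeriv (4 * n + 1) (fun u => f u ^ (2 * i + 1)) 0 := by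
  induction n with
  | zero =>
    have hrow : (fun i => (q : ℂ) ^ 0 * iteratedDeriv (4 * 0 + 1) (fun u => f u ^ (2 * i + 1)) 0) =
        fun i => if i = 0 then 1 else 0 := by
      funext i
      rcases eq_or_ne i 0 with rfl | hi
      · simp [h1]
      · simp [deriv_fun_pow hf.differentiableAt, h0, hi]
    rw [hrow]
    refine ⟨fun i => ?_, ⟨1, by simp⟩, ⟨0, by simp⟩⟩
    rcases eq_or_ne i 0 with rfl | hi
    · simp [evenRowDivisor]
    · simp [hi]
  | succ n ih =>
    convert ih.step hlam using 2 with i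
    rw [show 4 * (n + 1) + 1 = 4 * n + 1 + 2 + 2 by ring,
      iteratedDeriv_odd_pow_succ hf hode henergy]
    simp only [iteratedDeriv_odd_pow_succ hf hode henergy]
    simp only [funext (oddPowerStep_const_mul lam _ _), oddPowerStep_const_mul, pow_succ']
    ring

end IteratedDeriv

section Residue

open Interval

/-- The integral of `f` along the boundary of the rectangle with opposite corners `z` and `w`,
traversed counterclockwise when `z` is the lower left one. -/
noncomputable def rectIntegral (f : ℂ → ℂ) (z w : ℂ) : ℂ :=
  (∫ x in z.re..w.re, f (x + z.im * I)) - (∫ x in z.re..w.re, f (x + w.im * I))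
    + I * (∫ y in z.im..w.im, f (w.re + y * I)) - I * ∫ y in z.im..w.im, f (z.re + y * I)

/-- The union of the four sides of the rectangle with opposite corners `z` and `w`. -/
def rectBoundary (z w : ℂ) : Set ℂ :=
  {u ∈ z.Rectangle w | u.re = z.re ∨ u.re = w.re ∨ u.im = z.im ∨ u.im = w.im}

variable {z w s : ℂ} {f g : ℂ → ℂ}

theorem horizontal_mem_rectBoundary {x y : ℝ} (hx : x ∈ [[z.re, w.re]])
    (hy : y = z.im ∨ y = w.im) : (x + y * I : ℂ) ∈ rectBoundary z w := by
  rcases hy with rfl | rfl <;>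
    simp [rectBoundary, Complex.Rectangle, Complex.mem_reProdIm, hx]

theorem vertical_mem_rectBoundary {x y : ℝ} (hx : x = z.re ∨ x = w.re)
    (hy : y ∈ [[z.im, w.im]]) : (x + y * I : ℂ) ∈ rectBoundary z w := by
  rcases hx with rfl | rfl <;>
    simp [rectBoundary, Complex.Rectangle, Complex.mem_reProdIm, hy]

theorem rectIntegral_congr (h : EqOn f g (rectBoundary z w)) :
    rectIntegral f z w = rectIntegral g z w := by
  have hor : ∀ y, y = z.im ∨ y = w.im →
      ∫ x in z.re..w.re, f (x + y * I) = ∫ x in z.re..w.re, g (x + y * I) := fun y hy =>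
    intervalIntegral.integral_congr fun x hx => h (horizontal_mem_rectBoundary hx hy)
  have ver : ∀ x : ℝ, x = z.re ∨ x = w.re →
      ∫ y in z.im..w.im, f (x + y * I) = ∫ y in z.im..w.im, g (x + y * I) := fun x hx =>
    intervalIntegral.integral_congr fun y hy => h (vertical_mem_rectBoundary hx hy)
  simp only [rectIntegral, hor _ (.inl rfl), hor _ (.inr rfl), ver _ (.inl rfl), ver _ (.inr rfl)]

theorem intervalIntegrable_horizontal (hf : ContinuousOn f (rectBoundary z w)) {y : ℝ}
    (hy : y = z.im ∨ y = w.im) :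
    IntervalIntegrable (fun x : ℝ => f (x + y * I)) volume z.re w.re :=
  (hf.comp (f := fun x : ℝ => (x + y * I : ℂ)) (by fun_prop)
    fun _ hx => horizontal_mem_rectBoundary hx hy).intervalIntegrable

theorem intervalIntegrable_vertical (hf : ContinuousOn f (rectBoundary z w)) {x : ℝ}
    (hx : x = z.re ∨ x = w.re) :
    IntervalIntegrable (fun y : ℝ => f (x + y * I)) volume z.im w.im :=
  (hf.comp (f := fun y : ℝ => (x + y * I : ℂ)) (by fun_prop)
    fun _ hy => vertical_mem_rectBoundary hx hy).intervalIntegrable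

theorem rectIntegral_add (hf : ContinuousOn f (rectBoundary z w))
    (hg : ContinuousOn g (rectBoundary z w)) :
    rectIntegral (fun u => f u + g u) z w = rectIntegral f z w + rectIntegral g z w := by
  simp only [rectIntegral]
  rw [intervalIntegral.integral_add (intervalIntegrable_horizontal hf (.inl rfl))
      (intervalIntegrable_horizontal hg (.inl rfl)),
    intervalIntegral.integral_add (intervalIntegrable_horizontal hf (.inr rfl))
      (intervalIntegrable_horizontal hg (.inr rfl)),
    intervalIntegral.integral_add (intervalIntegrable_vertical hf (.inl rfl))
      (intervalIntegrable_vertical hg (.inl rfl)),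
    intervalIntegral.integral_add (intervalIntegrable_vertical hf (.inr rfl))
      (intervalIntegrable_vertical hg (.inr rfl))]
  ring

theorem rectIntegral_const_mul (c : ℂ) (f : ℂ → ℂ) (z w : ℂ) :
    rectIntegral (fun u => c * f u) z w = c * rectIntegral f z w := by
  simp only [rectIntegral, intervalIntegral.integral_const_mul]
  ring

theorem rectIntegral_zero (z w : ℂ) : rectIntegral (fun _ => 0) z w = 0 := by simp [rectIntegral]

theorem rectIntegral_finset_sum {ι : Type*} (S : Finset ι) {f : ι → ℂ → ℂ}
    (hf : ∀ i ∈ S, ContinuousOn (f i) (rectBoundary z w)) :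
    rectIntegral (fun u => ∑ i ∈ S, f i u) z w = ∑ i ∈ S, rectIntegral (f i) z w := by
  classical
  induction S using Finset.induction_on with
  | empty => simp [rectIntegral_zero]
  | insert i S hi ih =>
    have hS : ∀ j ∈ S, ContinuousOn (f j) (rectBoundary z w) := fun j hj =>
      hf j (Finset.mem_insert_of_mem hj)
    simp only [Finset.sum_insert hi]
    rw [rectIntegral_add (hf i (Finset.mem_insert_self i S)) (continuousOn_finsetSum S hS), ih hS]

theorem rectIntegral_eq_zero_of_differentiableOn (hf : DifferentiableOn ℂ f (z.Rectangle w)) :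
    rectIntegral f z w = 0 :=
  Complex.integral_boundary_rect_eq_zero_of_differentiableOn f z w hf

theorem integral_affine_inv {p d : ℂ} {a b : ℝ}
    (h : ∀ t ∈ [[a, b]], p + t * d ∈ Complex.slitPlane) :
    d * ∫ t in a..b, (p + t * d)⁻¹ = Complex.log (p + b * d) - Complex.log (p + a * d) := by
  have hderiv : ∀ t ∈ [[a, b]],
      HasDerivAt (fun t : ℝ => Complex.log (p + t * d)) (d * (p + t * d)⁻¹) t := fun t ht => by
    have h1 : HasDerivAt (fun t : ℝ => p + (t : ℂ) * d) (1 * d) t :=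
      ((hasDerivAt_id t).ofReal_comp.mul_const d).const_add p
    simpa [div_eq_mul_inv] using h1.clog_real (h t ht)
  rw [← intervalIntegral.integral_const_mul, intervalIntegral.integral_eq_sub_of_hasDerivAt hderiv]
  exact (continuousOn_const.mul (ContinuousOn.inv₀ (by fun_prop) fun t ht =>
    Complex.slitPlane_ne_zero (h t ht))).intervalIntegrable

theorem log_sub_log_neg {u : ℂ} (hu : 0 < u.im) : Complex.log u - Complex.log (-u) = π * I := by
  rw [Complex.log, Complex.log, norm_neg, Complex.arg_neg_eq_arg_sub_pi_of_im_pos hu]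
  push_cast
  ring

/-- Each side is integrated with a branch of the logarithm; on the left side the sign of `u - s` is
reversed so as to stay off the cut. -/
theorem rectIntegral_inv_sub (hs : s ∈ Ioo z.re w.re ×ℂ Ioo z.im w.im) :
    rectIntegral (fun u => (u - s)⁻¹) z w = 2 * π * I := by
  obtain ⟨⟨hs₁, hs₂⟩, hs₃, hs₄⟩ := hs
  have hor : ∀ y : ℝ, y ≠ s.im → ∫ x in z.re..w.re, ((x : ℂ) + y * I - s)⁻¹ =
      Complex.log (w.re + y * I - s) - Complex.log (z.re + y * I - s) := fun y hy => by
    have := integral_affine_inv (p := y * I - s) (d := 1) (a := z.re) (b := w.re)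
      fun t _ => Or.inr (by simpa [sub_eq_zero] using hy)
    simpa only [show ∀ u : ℂ, u + y * I - s = y * I - s + u * 1 from fun u => by ring,
      one_mul] using this
  have right : I * ∫ y in z.im..w.im, ((w.re : ℂ) + y * I - s)⁻¹ =
      Complex.log (w.re + w.im * I - s) - Complex.log (w.re + z.im * I - s) := by
    have := integral_affine_inv (p := w.re - s) (d := I) (a := z.im) (b := w.im)
      fun t _ => Or.inl (by simpa using hs₂)
    simpa only [sub_add_eq_add_sub] using this
  have left : I * ∫ y in z.im..w.im, ((z.re : ℂ) + y * I - s)⁻¹ =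
      Complex.log (-(z.re + w.im * I - s)) - Complex.log (-(z.re + z.im * I - s)) := by
    have := integral_affine_inv (p := s - z.re) (d := -I) (a := z.im) (b := w.im)
      fun t _ => Or.inl (by simpa using hs₁)
    have hneg : ∀ u : ℂ, z.re + u * I - s = -(s - z.re + u * -I) := fun u => by ring
    simp only [hneg, neg_neg, inv_neg]
    rw [intervalIntegral.integral_neg, mul_neg, ← neg_mul, this]
  have top := log_sub_log_neg (u := z.re + w.im * I - s) (by simpa using hs₄)
  have bottom := log_sub_log_neg (u := -(z.re + z.im * I - s)) (by simpa using hs₃)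
  rw [neg_neg] at bottom
  rw [rectIntegral, hor _ hs₃.ne, hor _ hs₄.ne', right, left]
  linear_combination top + bottom

theorem exists_differentiableOn_eq_add_mul_inv {U : Set ℂ} {c : ℂ} (hU : U ∈ 𝓝 s)
    (hf : DifferentiableOn ℂ f (U \ {s}))
    (hlim : Tendsto (fun u => (u - s) * f u) (𝓝[≠] s) (𝓝 c)) :
    ∃ g, DifferentiableOn ℂ g U ∧ ∀ u ≠ s, f u = g u + c * (u - s)⁻¹ := by
  let h : ℂ → ℂ := fun u => f u - c * (u - s)⁻¹
  have hh : DifferentiableOn ℂ h (U \ {s}) :=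
    hf.sub (DifferentiableOn.const_mul
      (DifferentiableOn.inv (by fun_prop) fun u hu => sub_ne_zero.2 hu.2) c)
  have hlim' : Tendsto (fun u => (u - s) * (h u - h s)) (𝓝[≠] s) (𝓝 0) := by
    have hself : Tendsto (fun u => (u - s) * h s) (𝓝[≠] s) (𝓝 ((s - s) * h s)) :=
      Tendsto.mono_left (Continuous.tendsto (by fun_prop) s) nhdsWithin_le_nhds
    have := (hlim.sub_const c).sub hself
    rw [sub_self, sub_self, zero_mul, sub_zero] at this
    refine this.congr' ?_
    filter_upwards [self_mem_nhdsWithin] with u hu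
    simp only [h, mul_sub, mul_left_comm _ c, mul_inv_cancel₀ (sub_ne_zero.2 hu), mul_one]
  have hlittle : (fun u => h u - h s) =o[𝓝[≠] s] fun u => (u - s)⁻¹ := by
    rw [Asymptotics.isLittleO_iff_tendsto']
    · exact hlim'.congr fun u => by rw [div_inv_eq_mul, mul_comm]
    · filter_upwards [self_mem_nhdsWithin] with u hu h0
      exact absurd (inv_eq_zero.1 h0) (sub_ne_zero.2 hu)
  refine ⟨_, Complex.differentiableOn_update_limUnder_of_isLittleO hU hh hlittle, fun u hu => ?_⟩
  rw [Function.update_of_ne hu, sub_add_cancel]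

/-- The principal parts are subtracted one at a time. -/
theorem exists_differentiableOn_eq_add_sum_mul_inv {U : Set ℂ} {c : ℂ → ℂ} (S : Finset ℂ)
    (hU : ∀ s ∈ S, U ∈ 𝓝 s) (hf : DifferentiableOn ℂ f (U \ S))
    (hlim : ∀ s ∈ S, Tendsto (fun u => (u - s) * f u) (𝓝[≠] s) (𝓝 (c s))) :
    ∃ g, DifferentiableOn ℂ g U ∧ ∀ u ∉ S, f u = g u + ∑ s ∈ S, c s * (u - s)⁻¹ := by
  classical
  induction S using Finset.induction_on generalizing f with
  | empty => exact ⟨f, by simpa using hf, by simp⟩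
  | insert s S hs ih =>
    have hUS : U \ S ∈ 𝓝 s := inter_mem (hU s (Finset.mem_insert_self s S))
      (S.finite_toSet.isClosed.isOpen_compl.mem_nhds hs)
    obtain ⟨g₁, hg₁, hfg₁⟩ := exists_differentiableOn_eq_add_mul_inv hUS
      (by simpa [sdiff_sdiff, union_comm] using hf) (hlim s (Finset.mem_insert_self s S))
    have hlim₁ : ∀ t ∈ S, Tendsto (fun u => (u - t) * g₁ u) (𝓝[≠] t) (𝓝 (c t)) := by
      intro t ht
      have hts : t ≠ s := fun h => hs (h ▸ ht)
      have hpole : ContinuousAt (fun u => (u - t) * (c s * (u - s)⁻¹)) t := by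
        have := sub_ne_zero.2 hts
        fun_prop (disch := assumption)
      have := (hlim t (Finset.mem_insert_of_mem ht)).sub
        (hpole.tendsto.mono_left nhdsWithin_le_nhds)
      rw [sub_self, zero_mul, sub_zero] at this
      refine this.congr' ?_
      filter_upwards [nhdsWithin_le_nhds (eventually_ne_nhds hts)] with u hu
      rw [hfg₁ u hu]
      ring
    obtain ⟨g, hg, hg₁g⟩ := ih (fun t ht => hU t (Finset.mem_insert_of_mem ht)) hg₁ hlim₁
    refine ⟨g, hg, fun u hu => ?_⟩
    rw [Finset.mem_insert, not_or] at hu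
    rw [hfg₁ u hu.1, hg₁g u hu.2, Finset.sum_insert hs]
    ring

theorem notMem_rectBoundary (hs : s ∈ Ioo z.re w.re ×ℂ Ioo z.im w.im) : s ∉ rectBoundary z w := by
  obtain ⟨⟨hs₁, hs₂⟩, hs₃, hs₄⟩ := hs
  rintro ⟨-, h | h | h | h⟩ <;> linarith

theorem rectangle_mem_nhds (hs : s ∈ Ioo z.re w.re ×ℂ Ioo z.im w.im) : z.Rectangle w ∈ 𝓝 s :=
  mem_of_superset ((isOpen_Ioo.reProdIm isOpen_Ioo).mem_nhds hs) fun _ hu =>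
    ⟨Icc_subset_uIcc (Ioo_subset_Icc_self hu.1), Icc_subset_uIcc (Ioo_subset_Icc_self hu.2)⟩

theorem rectIntegral_eq_sum_residues {c : ℂ → ℂ} (S : Finset ℂ)
    (hS : ∀ s ∈ S, s ∈ Ioo z.re w.re ×ℂ Ioo z.im w.im)
    (hf : DifferentiableOn ℂ f (z.Rectangle w \ S))
    (hlim : ∀ s ∈ S, Tendsto (fun u => (u - s) * f u) (𝓝[≠] s) (𝓝 (c s))) :
    rectIntegral f z w = 2 * π * I * ∑ s ∈ S, c s := by
  obtain ⟨g, hg, hfg⟩ := exists_differentiableOn_eq_add_sum_mul_inv S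
    (fun s hs => rectangle_mem_nhds (hS s hs)) hf hlim
  have hpole : ∀ s ∈ S, ContinuousOn (fun u => c s * (u - s)⁻¹) (rectBoundary z w) := fun s hs =>
    continuousOn_const.mul (ContinuousOn.inv₀ (by fun_prop) fun u hu h =>
      notMem_rectBoundary (hS s hs) (sub_eq_zero.1 h ▸ hu))
  rw [rectIntegral_congr fun u hu => hfg u fun hu' => notMem_rectBoundary (hS u hu') hu,
    rectIntegral_add (hg.continuousOn.mono fun u hu => hu.1) (continuousOn_finsetSum S hpole),
    rectIntegral_eq_zero_of_differentiableOn hg, rectIntegral_finset_sum S hpole, zero_add,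
    Finset.mul_sum]
  refine Finset.sum_congr rfl fun s hs => ?_
  rw [rectIntegral_const_mul, rectIntegral_inv_sub (hS s hs), mul_comm]

end Residue

section Parity

variable {f r : ℂ → ℂ}

theorem iteratedDeriv_apply_zero_of_odd (hf : Function.Odd f) {n : ℕ} (hn : Even n) :
    iteratedDeriv n f 0 = 0 := by
  have h := iteratedDeriv_comp_neg n f 0
  rwa [hn.neg_one_pow, one_smul, neg_zero, show (fun v => f (-v)) = fun v => -f v from funext hf,
    iteratedDeriv_fun_neg, neg_eq_self] at h

theorem deriv_apply_zero_of_even (hf : Function.Even f) : deriv f 0 = 0 := by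
  have h := deriv_comp_neg f 0
  rwa [show (fun v => f (-v)) = f from funext hf, neg_zero, self_eq_neg] at h

theorem analyticAt_dslope {a : ℂ} (hf : AnalyticAt ℂ f a) : AnalyticAt ℂ (dslope f a) a :=
  let ⟨_, hp⟩ := hf
  hp.has_fpower_series_dslope_fslope.analyticAt

theorem eq_mul_dslope_zero (h0 : f 0 = 0) (v : ℂ) : f v = v * dslope f 0 v := by
  simpa [h0] using (sub_smul_dslope f 0 v).symm

theorem even_dslope (hf : Function.Odd f) : Function.Even (dslope f 0) := fun v => by
  rcases eq_or_ne v 0 with rfl | hv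
  · rw [neg_zero]
  · rw [dslope_of_ne _ (neg_ne_zero.2 hv), dslope_of_ne _ hv, slope_def_field, slope_def_field,
      hf, hf.map_zero, sub_zero, sub_zero, sub_zero, sub_zero, neg_div_neg_eq]

end Parity

section DoublyPeriodic

variable {f : ℂ → ℂ} {ω : ℂ} {T : ℝ}

theorem exists_translate_mem_periodRectangle (hω : 0 < ω.im) (hT : 0 < T) (v : ℂ) :
    ∃ l n : ℤ, |(v - l • ω - n • (T : ℂ)).im| ≤ ω.im / 2 ∧
      |(v - l • ω - n • (T : ℂ)).re| ≤ T / 2 := by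
  have hround : ∀ {P : ℝ}, 0 < P → ∀ x, |x - round (x / P) * P| ≤ P / 2 := fun {P} hP x => by
    have h := mul_le_mul_of_nonneg_right (abs_sub_round (x / P)) hP.le
    rwa [← abs_of_pos hP, ← abs_mul, sub_mul, abs_of_pos hP, div_mul_cancel₀ x hP.ne',
      one_div_mul_eq_div] at h
  refine ⟨round (v.im / ω.im), round ((v - round (v.im / ω.im) • ω).re / T), ?_, ?_⟩
  · simpa using hround hω v.im
  · simpa using hround hT (v - round (v.im / ω.im) • ω).re

theorem eq_apply_zero_of_doublyPeriodic (hω : 0 < ω.im) (hT : 0 < T) (hfω : f.Periodic ω)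
    (hfT : f.Periodic T)
    (hf : ∀ v : ℂ, |v.im| ≤ ω.im / 2 → |v.re| ≤ T / 2 → DifferentiableAt ℂ f v) (v : ℂ) :
    f v = f 0 := by
  have htrans : ∀ (l n : ℤ) (v : ℂ), f (v - l • ω - n • (T : ℂ)) = f v := fun l n v => by
    rw [hfT.sub_zsmul_eq, hfω.sub_zsmul_eq]
  have hdiff : Differentiable ℂ f := fun v => by
    obtain ⟨l, n, him, hre⟩ := exists_translate_mem_periodRectangle hω hT v
    rw [show f = fun v => f (v - l • ω - n • (T : ℂ)) from funext fun v => (htrans l n v).symm]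
    exact (hf _ him hre).fun_comp' v (f := fun v => v - l • ω - n • (T : ℂ)) (by fun_prop)
  obtain ⟨C, hC⟩ := (isCompact_Icc (a := -(T / 2)) (b := T / 2)).reProdIm
    (isCompact_Icc (a := -(ω.im / 2)) (b := ω.im / 2))
    |>.exists_bound_of_continuousOn hdiff.continuous.continuousOn
  refine hdiff.apply_eq_apply_of_bounded (isBounded_iff_forall_norm_le.2 ⟨C, ?_⟩) v 0
  rintro _ ⟨v, rfl⟩
  obtain ⟨l, n, him, hre⟩ := exists_translate_mem_periodRectangle hω hT v
  exact htrans l n v ▸ hC _ ⟨abs_le.1 hre, abs_le.1 him⟩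

end DoublyPeriodic

section Cosecant

variable {r : ℂ → ℂ} {v : ℂ}

theorem hasDerivAt_csc (hv : Complex.sin v ≠ 0) :
    HasDerivAt (fun u => (Complex.sin u)⁻¹) (-Complex.cos v / Complex.sin v ^ 2) v :=
  (Complex.hasDerivAt_sin v).inv hv

theorem deriv_deriv_csc_add (hr : AnalyticAt ℂ r v) (hv : Complex.sin v ≠ 0) :
    deriv (deriv fun u => (Complex.sin u)⁻¹ + r u) v =
      2 / Complex.sin v ^ 3 - 1 / Complex.sin v + deriv (deriv r) v := by
  have hderiv : deriv (fun u => (Complex.sin u)⁻¹ + r u) =ᶠ[𝓝 v]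
      fun u => -Complex.cos u / Complex.sin u ^ 2 + deriv r u := by
    filter_upwards [hr.eventually_analyticAt,
      Complex.continuous_sin.continuousAt.eventually_ne hv] with u hu hsin
    exact ((hasDerivAt_csc hsin).add hu.differentiableAt.hasDerivAt).deriv
  rw [hderiv.deriv_eq]
  refine ((((Complex.hasDerivAt_cos v).fun_neg.fun_div ((Complex.hasDerivAt_sin v).fun_pow 2)
    (pow_ne_zero 2 hv)).add hr.deriv.differentiableAt.hasDerivAt).congr_deriv ?_).deriv
  simp only [Nat.cast_ofNat, Nat.add_one_sub_one, pow_one]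
  field_simp
  linear_combination 2 * Complex.sin_sq_add_cos_sq v

-- With `σ v = sin v / v` and `r v = v (φ v) (σ v)`, where `σ` and `φ` are even and analytic, the
-- terms of order `v⁻³` cancel, and `B` is chosen to cancel those of order `v⁻¹`.
theorem exists_csc_add_duffing_defect_analyticAt (hr : AnalyticAt ℂ r 0) (hodd : Function.Odd r) :
    ∃ (B : ℂ) (G : ℂ → ℂ), AnalyticAt ℂ G 0 ∧ G 0 = 0 ∧ ∀ᶠ v in 𝓝[≠] 0,
      deriv (deriv fun v => (Complex.sin v)⁻¹ + r v) v =
        2 * ((Complex.sin v)⁻¹ + r v) ^ 3 + B * ((Complex.sin v)⁻¹ + r v) + G v := by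
  have hr0 : r 0 = 0 := hodd.map_zero
  set σ := dslope Complex.sin 0 with hσ
  have hσ0 : σ 0 = 1 := by rw [hσ, dslope_same, Complex.deriv_sin, Complex.cos_zero]
  have hσa : AnalyticAt ℂ σ 0 := analyticAt_dslope Complex.analyticAt_sin
  have hσne : σ 0 ≠ 0 := hσ0 ▸ one_ne_zero
  set φ : ℂ → ℂ := fun v => dslope r 0 v / σ v with hφ
  have hφeven : Function.Even φ := fun v => by
    simp only [hφ, hσ, even_dslope hodd v, even_dslope Complex.sin_neg v]
  have hφa : AnalyticAt ℂ φ 0 := (analyticAt_dslope hr).div hσa hσne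
  refine ⟨-1 - 6 * φ 0, fun v => -6 * (dslope φ 0 v / σ v) + deriv (deriv r) v - 6 * φ v * r v
    - 2 * r v ^ 3 - (-1 - 6 * φ 0) * r v, ?_, ?_, ?_⟩
  · have hφσ := (analyticAt_dslope hφa).fun_div hσa hσne
    have := hr.deriv.deriv
    fun_prop
  · have hr2 : deriv (deriv r) 0 = 0 := by
      have h := iteratedDeriv_apply_zero_of_odd hodd (n := 1 + 1) even_two
      rwa [iteratedDeriv_succ, iteratedDeriv_one] at h
    simp [hr0, hr2, deriv_apply_zero_of_even hφeven]
  · filter_upwards [(hσa.continuousAt.eventually_ne hσne).filter_mono nhdsWithin_le_nhds,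
      self_mem_nhdsWithin, hr.eventually_analyticAt.filter_mono nhdsWithin_le_nhds]
      with v hσv (hv : v ≠ 0) hrv
    have hsin : Complex.sin v = v * σ v := eq_mul_dslope_zero Complex.sin_zero v
    have hrφ : r v = v * (φ v * σ v) := by
      rw [hφ, div_mul_cancel₀ _ hσv, ← eq_mul_dslope_zero hr0]
    have hφv : dslope φ 0 v = (φ v - φ 0) / v := by
      rw [dslope_of_ne _ hv, slope_def_field, sub_zero]
    rw [deriv_deriv_csc_add hrv (hsin ▸ mul_ne_zero hv hσv), hφv, hsin, hrφ]
    field_simp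
    ring

end Cosecant

section CosecantSum

variable {κ v : ℂ}

theorem abs_sinh_im_le_norm_sin (z : ℂ) : |sinh z.im| ≤ ‖Complex.sin z‖ := by
  have hsq : ‖Complex.sin z‖ ^ 2 = sin z.re ^ 2 + sinh z.im ^ 2 := by
    rw [← Complex.normSq_eq_norm_sq, Complex.sin_eq, ← Complex.ofReal_sin, ← Complex.ofReal_cos,
      ← Complex.ofReal_sinh, ← Complex.ofReal_cosh, ← Complex.ofReal_mul, ← Complex.ofReal_mul,
      Complex.normSq_add_mul_I]
    linear_combination sinh z.im ^ 2 * sin_sq_add_cos_sq z.re + sin z.re ^ 2 * cosh_sq z.im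
  exact abs_le_of_sq_le_sq (hsq ▸ le_add_of_nonneg_left (sq_nonneg _)) (norm_nonneg _)

theorem norm_sin_le_exp_abs_im (z : ℂ) : ‖Complex.sin z‖ ≤ rexp |z.im| := by
  have h₁ : ‖Complex.exp (-z * I)‖ ≤ rexp |z.im| := by
    simpa [Complex.norm_exp] using le_abs_self z.im
  have h₂ : ‖Complex.exp (z * I)‖ ≤ rexp |z.im| := by
    simpa [Complex.norm_exp] using neg_le_abs z.im
  rw [Complex.sin, norm_div, norm_mul, Complex.norm_I, mul_one, Complex.norm_two]
  linarith [norm_sub_le (Complex.exp (-z * I)) (Complex.exp (z * I))]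

theorem sin_ne_zero_of_im_ne_zero {z : ℂ} (hz : z.im ≠ 0) : Complex.sin z ≠ 0 :=
  norm_pos_iff.1 ((abs_pos.2 (sinh_ne_zero.2 hz)).trans_le (abs_sinh_im_le_norm_sin z))

theorem exp_mul_sinh_le_sinh_add {a b : ℝ} (hb : 0 ≤ b) : rexp b * sinh a ≤ sinh (a + b) := by
  rw [sinh_eq, sinh_eq, exp_add, neg_add, exp_add]
  nlinarith [exp_pos (-a), exp_le_exp.2 (by linarith : -b ≤ b)]

theorem norm_csc_le {a b : ℝ} {z : ℂ} (ha : 0 < a) (hb : 0 ≤ b) (h : a + b ≤ |z.im|) :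
    ‖(Complex.sin z)⁻¹‖ ≤ (sinh a)⁻¹ * rexp (-b) := by
  have : 0 < sinh a := sinh_pos_iff.2 ha
  rw [norm_inv, exp_neg, ← mul_inv, mul_comm]
  refine inv_anti₀ (by positivity) ((exp_mul_sinh_le_sinh_add hb).trans ?_)
  exact (sinh_le_sinh.2 h).trans (abs_sinh z.im ▸ abs_sinh_im_le_norm_sin z)

/-- The lattice sum `∑_{l ∈ ℤ} 1 / sin (v - 2lκ)`, a Jacobi elliptic function (a multiple of `ns`)
with half period `κ`. -/
noncomputable def cscSum (κ v : ℂ) : ℂ := ∑' l : ℤ, (Complex.sin (v - 2 * l * κ))⁻¹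

/-- The part of `cscSum κ` that is regular in the strip `|Im v| < 2 Im κ`. -/
noncomputable def cscSumRegular (κ v : ℂ) : ℂ :=
  ∑' l : ℤ, if l = 0 then 0 else (Complex.sin (v - 2 * l * κ))⁻¹

theorem periodic_cscSum (κ : ℂ) : (cscSum κ).Periodic (2 * κ) := fun v => by
  rw [cscSum, cscSum, ← (Equiv.addRight (1 : ℤ)).tsum_eq]
  refine tsum_congr fun l => ?_
  rw [Equiv.coe_addRight, Int.cast_add, Int.cast_one]
  ring_nf

theorem antiperiodic_cscSum (κ : ℂ) : (cscSum κ).Antiperiodic π := fun v => by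
  rw [cscSum, cscSum, ← tsum_neg]
  refine tsum_congr fun l => ?_
  rw [add_sub_right_comm, Complex.sin_add_pi, inv_neg]

theorem odd_cscSum (κ : ℂ) : Function.Odd (cscSum κ) := fun v => by
  rw [cscSum, cscSum, ← (Equiv.neg ℤ).tsum_eq, ← tsum_neg]
  refine tsum_congr fun l => ?_
  rw [← inv_neg, ← Complex.sin_neg, Equiv.neg_apply, Int.cast_neg]
  ring_nf

theorem odd_cscSumRegular (κ : ℂ) : Function.Odd (cscSumRegular κ) := fun v => by
  rw [cscSumRegular, cscSumRegular, ← (Equiv.neg ℤ).tsum_eq, ← tsum_neg]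
  refine tsum_congr fun l => ?_
  rcases eq_or_ne l 0 with rfl | hl
  · simp
  · rw [Equiv.neg_apply, if_neg (neg_ne_zero.2 hl), if_neg hl, ← inv_neg, ← Complex.sin_neg,
      Int.cast_neg]
    ring_nf

theorem le_abs_im_sub_int_mul (hκ : 0 < κ.im) {R : ℝ} (hv : |v.im| < R) (l : ℤ) :
    2 * κ.im - R + 2 * κ.im * (l.natAbs - 1) ≤ |(v - 2 * l * κ).im| := by
  have him : (v - 2 * l * κ).im = v.im - 2 * l * κ.im := by simp
  have habs : |2 * (l : ℝ) * κ.im| = 2 * l.natAbs * κ.im := by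
    rw [abs_mul, abs_mul, abs_of_pos hκ, abs_two, Nat.cast_natAbs, Int.cast_abs]
  have h := abs_sub_abs_le_abs_sub (2 * (l : ℝ) * κ.im) v.im
  rw [habs] at h
  rw [him, abs_sub_comm]
  linarith

theorem norm_csc_sub_int_mul_le (hκ : 0 < κ.im) {R : ℝ} (hR : R < 2 * κ.im) (hv : |v.im| < R)
    {l : ℤ} (hl : l ≠ 0) : ‖(Complex.sin (v - 2 * l * κ))⁻¹‖ ≤
      (sinh (2 * κ.im - R))⁻¹ * rexp (-(2 * κ.im * (l.natAbs - 1))) := by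
  have hl' : (1 : ℝ) ≤ l.natAbs := mod_cast Int.natAbs_pos.2 hl
  exact norm_csc_le (sub_pos.2 hR) (mul_nonneg (by linarith) (sub_nonneg.2 hl'))
    (le_abs_im_sub_int_mul hκ hv l)

theorem sin_sub_int_mul_ne_zero (hκ : 0 < κ.im) (hv : |v.im| < 2 * κ.im) {l : ℤ} (hl : l ≠ 0) :
    Complex.sin (v - 2 * l * κ) ≠ 0 := by
  obtain ⟨R, hvR, hR⟩ := exists_between hv
  have hl' : (1 : ℝ) ≤ l.natAbs := mod_cast Int.natAbs_pos.2 hl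
  refine sin_ne_zero_of_im_ne_zero (abs_pos.1 (lt_of_lt_of_le ?_ (le_abs_im_sub_int_mul hκ hvR l)))
  exact add_pos_of_pos_of_nonneg (sub_pos.2 hR) (mul_nonneg (by linarith) (sub_nonneg.2 hl'))

theorem summable_exp_neg_mul_nat {η : ℝ} (hη : 0 < η) :
    Summable fun m : ℕ => rexp (-(η * m)) := by
  simpa only [← neg_mul, mul_comm] using Real.summable_exp_nat_mul_iff.2 (neg_lt_zero.2 hη)

theorem summable_exp_neg_mul_natAbs {η : ℝ} (hη : 0 < η) (c : ℝ) :
    Summable fun l : ℤ => c * rexp (-(η * (l.natAbs - 1))) := by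
  have hnat : Summable fun n : ℕ => c * rexp (-(η * (n - 1))) :=
    ((summable_exp_neg_mul_nat hη).mul_left (c * rexp η)).congr fun n => by
      rw [mul_assoc, ← exp_add]
      ring_nf
  exact Summable.of_nat_of_neg (by simpa using hnat) (by simpa using hnat)

theorem summable_csc_sub_int_mul (hκ : 0 < κ.im) (hv : |v.im| < 2 * κ.im) :
    Summable fun l : ℤ => (Complex.sin (v - 2 * l * κ))⁻¹ := by
  obtain ⟨R, hvR, hR⟩ := exists_between hv
  refine Summable.of_norm_bounded_eventually
    (summable_exp_neg_mul_natAbs (η := 2 * κ.im) (by linarith) (sinh (2 * κ.im - R))⁻¹) ?_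
  filter_upwards [(finite_singleton (0 : ℤ)).compl_mem_cofinite] with l hl
  exact norm_csc_sub_int_mul_le hκ hR hvR hl

theorem cscSum_eq_csc_add (hκ : 0 < κ.im) (hv : |v.im| < 2 * κ.im) :
    cscSum κ v = (Complex.sin v)⁻¹ + cscSumRegular κ v := by
  rw [cscSum, (summable_csc_sub_int_mul hκ hv).tsum_eq_add_tsum_ite 0, cscSumRegular,
    Int.cast_zero, mul_zero, zero_mul, sub_zero]

theorem isOpen_abs_im_lt (R : ℝ) : IsOpen {v : ℂ | |v.im| < R} :=
  isOpen_lt (by fun_prop) continuous_const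

theorem analyticAt_cscSumRegular (hκ : 0 < κ.im) (hv : |v.im| < 2 * κ.im) :
    AnalyticAt ℂ (cscSumRegular κ) v := by
  obtain ⟨R, hvR, hR⟩ := exists_between hv
  have : 0 < sinh (2 * κ.im - R) := sinh_pos_iff.2 (sub_pos.2 hR)
  suffices DifferentiableOn ℂ (cscSumRegular κ) {v : ℂ | |v.im| < R} from
    this.analyticAt ((isOpen_abs_im_lt R).mem_nhds hvR)
  refine Complex.differentiableOn_tsum_of_summable_norm
    (summable_exp_neg_mul_natAbs (η := 2 * κ.im) (by linarith) (sinh (2 * κ.im - R))⁻¹)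
    (fun l => ?_) (isOpen_abs_im_lt R) fun l w hw => ?_
  · rcases eq_or_ne l 0 with rfl | hl
    · simp only [if_true]
      exact differentiableOn_const 0
    · simp only [hl, if_false]
      refine DifferentiableOn.inv (by fun_prop) fun w (hw : |w.im| < R) => ?_
      exact sin_sub_int_mul_ne_zero hκ (hw.trans hR) hl
  · rcases eq_or_ne l 0 with rfl | hl
    · rw [if_pos rfl, norm_zero]
      positivity
    · rw [if_neg hl]
      exact norm_csc_sub_int_mul_le hκ hR hw hl

theorem cscSum_eventuallyEq (hκ : 0 < κ.im) (hv : |v.im| < 2 * κ.im) :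
    cscSum κ =ᶠ[𝓝 v] fun v => (Complex.sin v)⁻¹ + cscSumRegular κ v := by
  filter_upwards [(isOpen_abs_im_lt _).mem_nhds hv] with u hu using cscSum_eq_csc_add hκ hu

theorem analyticAt_cscSum (hκ : 0 < κ.im) (hv : |v.im| < 2 * κ.im) (hsin : Complex.sin v ≠ 0) :
    AnalyticAt ℂ (cscSum κ) v :=
  ((Complex.analyticAt_sin.inv hsin).add (analyticAt_cscSumRegular hκ hv)).congr
    (cscSum_eventuallyEq hκ hv).symm

theorem sin_ne_zero_of_abs_re_lt_pi (hv : v ≠ 0) (hre : |v.re| < π) : Complex.sin v ≠ 0 := by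
  intro hsin
  obtain ⟨n, rfl⟩ := Complex.sin_eq_zero_iff.1 hsin
  have hn : |(n : ℝ)| < 1 := by
    simpa [abs_mul, abs_of_pos pi_pos, mul_lt_iff_lt_one_left pi_pos] using hre
  have : n = 0 := Int.abs_lt_one_iff.1 (mod_cast hn)
  simp [this] at hv

theorem deriv_deriv_cscSum_comp {ω : ℂ} {ε : ℂ} (h : ∀ v, cscSum κ (v + ω) = ε * cscSum κ v)
    (v : ℂ) : deriv (deriv (cscSum κ)) (v + ω) = ε * deriv (deriv (cscSum κ)) v := by
  rw [← deriv_comp_add_const]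
  simp only [← deriv_comp_add_const, h, deriv_const_mul_field]

/-- The defect of `cscSum κ` in the Duffing equation `y'' = 2 y³ + B y`. -/
noncomputable def duffingDefect (κ B v : ℂ) : ℂ :=
  deriv (deriv (cscSum κ)) v - 2 * cscSum κ v ^ 3 - B * cscSum κ v

theorem periodic_duffingDefect (κ B : ℂ) : (duffingDefect κ B).Periodic (2 * κ) := fun v => by
  rw [duffingDefect, deriv_deriv_cscSum_comp (ε := 1) fun v => by rw [periodic_cscSum, one_mul],
    periodic_cscSum, one_mul, duffingDefect]

theorem antiperiodic_duffingDefect (κ B : ℂ) : (duffingDefect κ B).Antiperiodic π := fun v => by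
  rw [duffingDefect, deriv_deriv_cscSum_comp (ε := -1)
    fun v => by rw [antiperiodic_cscSum, neg_one_mul], antiperiodic_cscSum, duffingDefect]
  ring

theorem analyticAt_duffingDefect (hκ : 0 < κ.im) (B : ℂ) (hv : |v.im| < 2 * κ.im)
    (hsin : Complex.sin v ≠ 0) : AnalyticAt ℂ (duffingDefect κ B) v := by
  have hC := analyticAt_cscSum hκ hv hsin
  exact (hC.deriv.deriv.sub (analyticAt_const.mul (hC.pow 3))).sub (analyticAt_const.mul hC)

-- The equation persists at the poles, where both sides take the junk value `0`.
theorem exists_deriv_deriv_cscSum_eq (hκ : 0 < κ.im) :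
    ∃ B : ℂ, ∀ v, deriv (deriv (cscSum κ)) v = 2 * cscSum κ v ^ 3 + B * cscSum κ v := by
  have h0 : |(0 : ℂ).im| < 2 * κ.im := by simpa using hκ
  obtain ⟨B, G, hG, hG0, hBG⟩ :=
    exists_csc_add_duffing_defect_analyticAt (analyticAt_cscSumRegular hκ h0) (odd_cscSumRegular κ)
  have hdefect0 : duffingDefect κ B 0 = 0 := by
    have h := iteratedDeriv_apply_zero_of_odd (odd_cscSum κ) (n := 1 + 1) even_two
    rw [iteratedDeriv_succ, iteratedDeriv_one] at h
    rw [duffingDefect, h, (odd_cscSum κ).map_zero]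
    ring
  have hG_eq : duffingDefect κ B =ᶠ[𝓝 0] G := by
    have hC := cscSum_eventuallyEq hκ h0
    rw [← nhdsNE_sup_pure, EventuallyEq, eventually_sup]
    refine ⟨?_, by simpa [hG0] using hdefect0⟩
    filter_upwards [hBG, hC.filter_mono nhdsWithin_le_nhds,
      hC.deriv.deriv.filter_mono nhdsWithin_le_nhds] with v hv h₀ h₂
    rw [duffingDefect, h₂, h₀, hv]
    ring
  have hdiff : ∀ v : ℂ, |v.im| ≤ (2 * κ).im / 2 → |v.re| ≤ π / 2 →
      DifferentiableAt ℂ (duffingDefect κ B) v := fun v him hre => by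
    have him' : |v.im| ≤ κ.im := by simpa using him
    rcases eq_or_ne v 0 with rfl | hv
    · exact (hG.congr hG_eq.symm).differentiableAt
    · exact (analyticAt_duffingDefect hκ B (by linarith)
        (sin_ne_zero_of_abs_re_lt_pi hv (by linarith [pi_pos]))).differentiableAt
  -- The defect is only antiperiodic under `v ↦ v + π`, so Liouville's theorem is applied to its
  -- square.
  have hconst := eq_apply_zero_of_doublyPeriodic (f := fun v => duffingDefect κ B v ^ 2)
    (by simpa using hκ) pi_pos (fun v => by simp only [periodic_duffingDefect κ B v])
    (fun v => by simp only [antiperiodic_duffingDefect κ B v, neg_sq])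
    fun v him hre => (hdiff v him hre).fun_pow 2
  refine ⟨B, fun v => ?_⟩
  have hv : duffingDefect κ B v = 0 := by
    simpa only [hdefect0, zero_pow two_ne_zero, pow_eq_zero_iff two_ne_zero] using hconst v
  rw [duffingDefect] at hv
  linear_combination hv

end CosecantSum

section FourierExpansion

variable {κ x : ℂ}

theorem hasSum_csc (hx : 0 < x.im) :
    HasSum (fun m : ℕ => -2 * I * Complex.exp (I * ((2 * m + 1) * x))) (Complex.sin x)⁻¹ := by
  have hlt : ‖Complex.exp (I * (2 * x))‖ < 1 := by
    simpa [Complex.norm_exp] using hx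
  have hsin : Complex.sin x =
      (1 - Complex.exp (I * (2 * x))) * (-2 * I * Complex.exp (I * x))⁻¹ := by
    have : Complex.exp (I * (2 * x)) = Complex.exp (I * x) * Complex.exp (I * x) := by
      rw [← Complex.exp_add]
      ring_nf
    rw [Complex.sin, neg_mul, Complex.exp_neg, mul_comm x, this]
    have := Complex.exp_ne_zero (I * x)
    field_simp
    linear_combination (1 - Complex.exp (I * x) ^ 2) * Complex.I_sq
  rw [hsin, mul_inv, inv_inv, mul_comm _⁻¹]
  refine ((hasSum_geometric_of_norm_lt_one hlt).mul_left _).congr_fun fun m => ?_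
  rw [mul_assoc (-2 * I), ← Complex.exp_nat_mul, ← Complex.exp_add]
  ring_nf

/-- The terms of the double series obtained by expanding each cosecant of `cscSum κ (x - κ)` in
powers of `exp (2 I x)`, with the terms `± x` combined. -/
noncomputable def cscDoubleSeries (κ x : ℂ) (m l : ℕ) : ℂ :=
  4 * Complex.sin ((2 * m + 1) * x) * Complex.exp (I * ((2 * m + 1) * ((2 * l + 1) * κ)))

theorem im_odd_mul (m : ℕ) (x : ℂ) : ((2 * m + 1) * x).im = (2 * m + 1) * x.im := by
  simp

theorem summable_cscDoubleSeries (hκ : 0 < κ.im) (hx : |x.im| < κ.im) :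
    Summable (Function.uncurry (cscDoubleSeries κ x)) := by
  have hsum := ((summable_exp_neg_mul_nat (sub_pos.2 hx)).mul_of_nonneg
    (summable_exp_neg_mul_nat hκ) (fun _ => by positivity) fun _ => by positivity).mul_left 4
  refine Summable.of_norm_bounded hsum fun ⟨m, l⟩ => ?_
  have hexp : ‖Complex.exp (I * ((2 * m + 1) * ((2 * l + 1) * κ)))‖ =
      rexp (-((2 * m + 1) * ((2 * l + 1) * κ.im))) := by
    rw [Complex.norm_exp, Complex.I_mul_re, im_odd_mul, im_odd_mul]
  have hsin := norm_sin_le_exp_abs_im ((2 * m + 1) * x)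
  rw [im_odd_mul, abs_mul, abs_of_nonneg (by positivity : (0 : ℝ) ≤ 2 * m + 1)] at hsin
  rw [Function.uncurry_apply_pair, cscDoubleSeries, norm_mul, norm_mul, hexp, ← exp_add,
    Complex.norm_ofNat, mul_assoc]
  refine mul_le_mul_of_nonneg_left ((mul_le_mul_of_nonneg_right hsin (exp_nonneg _)).trans ?_)
    zero_le_four
  rw [← exp_add, exp_le_exp]
  have hml : 0 ≤ (m : ℝ) * l * κ.im := by positivity
  have hmx : 0 ≤ ((m : ℝ) + 1) * (κ.im - |x.im|) := mul_nonneg (by positivity) (sub_pos.2 hx).le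
  have hl : 0 ≤ (l : ℝ) * κ.im := by positivity
  linarith

theorem hasSum_cscDoubleSeries_fst (hκ : 0 < κ.im) (hx : |x.im| < κ.im) (l : ℕ) :
    HasSum (fun m => cscDoubleSeries κ x m l)
      ((Complex.sin ((2 * l + 1) * κ + x))⁻¹ - (Complex.sin ((2 * l + 1) * κ - x))⁻¹) := by
  obtain ⟨hx₁, hx₂⟩ := abs_lt.1 hx
  have hl : 0 ≤ (l : ℝ) * κ.im := by positivity
  have hadd : 0 < ((2 * l + 1) * κ + x).im := by
    rw [Complex.add_im, im_odd_mul]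
    linarith
  have hsub : 0 < ((2 * l + 1) * κ - x).im := by
    rw [Complex.sub_im, im_odd_mul]
    linarith
  refine ((hasSum_csc hadd).sub (hasSum_csc hsub)).congr_fun fun m => ?_
  rw [cscDoubleSeries, mul_add (2 * (m : ℂ) + 1), mul_sub (2 * (m : ℂ) + 1), mul_add I, mul_sub I,
    sub_eq_add_neg (I * _), Complex.exp_add, Complex.exp_add, Complex.sin, neg_mul, mul_comm _ I]
  ring_nf

theorem hasSum_cscDoubleSeries_snd (hκ : 0 < κ.im) (m : ℕ) :
    HasSum (fun l => cscDoubleSeries κ x m l)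
      (2 * I / Complex.sin ((2 * m + 1) * κ) * Complex.sin ((2 * m + 1) * x)) := by
  have hm : 0 < ((2 * m + 1) * κ).im := by
    rw [im_odd_mul]
    positivity
  rw [div_mul_eq_mul_div, div_eq_mul_inv]
  refine ((hasSum_csc hm).mul_left _).congr_fun fun l => ?_
  rw [cscDoubleSeries, mul_left_comm (2 * (m : ℂ) + 1)]
  linear_combination 4 * Complex.sin ((2 * m + 1) * x) *
    Complex.exp (I * ((2 * l + 1) * ((2 * m + 1) * κ))) * Complex.I_sq

theorem cscSum_sub_half_period_eq_tsum (hκ : 0 < κ.im) (hx : |x.im| < κ.im) :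
    cscSum κ (x - κ) =
      ∑' m : ℕ, 2 * I / Complex.sin ((2 * m + 1) * κ) * Complex.sin ((2 * m + 1) * x) := by
  have him : |(x - κ).im| < 2 * κ.im := by
    obtain ⟨hx₁, hx₂⟩ := abs_lt.1 hx
    rw [Complex.sub_im, abs_lt]
    constructor <;> linarith
  calc cscSum κ (x - κ)
    _ = ∑' l : ℕ,
        ((Complex.sin ((2 * l + 1) * κ + x))⁻¹ - (Complex.sin ((2 * l + 1) * κ - x))⁻¹) := by
      rw [cscSum, ← (summable_csc_sub_int_mul hκ him).hasSum.nat_add_neg_add_one.tsum_eq]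
      refine tsum_congr fun l => ?_
      rw [sub_eq_neg_add (Complex.sin _)⁻¹, ← inv_neg, ← Complex.sin_neg]
      push_cast
      ring_nf
    _ = ∑' (l : ℕ) (m : ℕ), cscDoubleSeries κ x m l :=
      tsum_congr fun l => (hasSum_cscDoubleSeries_fst hκ hx l).tsum_eq.symm
    _ = ∑' (m : ℕ) (l : ℕ), cscDoubleSeries κ x m l := (summable_cscDoubleSeries hκ hx).tsum_comm
    _ = _ := tsum_congr fun m => (hasSum_cscDoubleSeries_snd hκ m).tsum_eq

theorem hasSum_iteratedDeriv_of_summable_norm {ι : Type*} {F : ι → ℂ → ℂ} {u : ι → ℝ} {U : Set ℂ}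
    {z : ℂ} (hu : Summable u) (hF : ∀ i, DifferentiableOn ℂ (F i) U) (hU : IsOpen U)
    (hle : ∀ i, ∀ w ∈ U, ‖F i w‖ ≤ u i) (hz : z ∈ U) (n : ℕ) :
    HasSum (fun i => iteratedDeriv n (F i) z) (iteratedDeriv n (fun w => ∑' i, F i w) z) := by
  have hanalytic (s : Finset ι) : AnalyticOnNhd ℂ (fun w => ∑ i ∈ s, F i w) U :=
    (DifferentiableOn.fun_sum fun i _ => hF i).analyticOnNhd hU
  have hlim : TendstoLocallyUniformlyOn
      (fun s : Finset ι => iteratedDeriv n fun w => ∑ i ∈ s, F i w)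
      (iteratedDeriv n fun w => ∑' i, F i w) atTop U := by
    induction n with
    | zero => simpa only [iteratedDeriv_zero] using
        (tendstoUniformlyOn_tsum hu hle).tendstoLocallyUniformlyOn
    | succ n ih =>
      simp only [iteratedDeriv_succ]
      refine ih.deriv (.of_forall fun s w hw => ?_) hU
      rw [iteratedDeriv_eq_iterate]
      exact ((hanalytic s w hw).iterated_deriv n).differentiableAt.differentiableWithinAt
  refine (hlim.tendsto_at hz).congr fun s => ?_
  exact iteratedDeriv_fun_sum fun i _ => ((hF i).analyticAt (hU.mem_nhds hz)).contDiffAt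

theorem norm_csc_mul_sin_odd_le (hκ : 0 < κ.im) (hx : |x.im| < κ.im / 2) (m : ℕ) :
    ‖2 * I / Complex.sin ((2 * m + 1) * κ) * Complex.sin ((2 * m + 1) * x)‖ ≤
      2 * (sinh κ.im)⁻¹ * rexp (κ.im / 2) * rexp (-(κ.im * m)) := by
  have hcsc : ‖(Complex.sin ((2 * m + 1) * κ))⁻¹‖ ≤ (sinh κ.im)⁻¹ * rexp (-(2 * m * κ.im)) := by
    refine norm_csc_le hκ (by positivity) (le_of_eq_of_le ?_ (le_abs_self _))
    rw [im_odd_mul]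
    ring
  have hsin : ‖Complex.sin ((2 * m + 1) * x)‖ ≤ rexp ((2 * m + 1) * (κ.im / 2)) := by
    refine (norm_sin_le_exp_abs_im _).trans (exp_le_exp.2 ?_)
    rw [im_odd_mul, abs_mul, abs_of_nonneg (by positivity)]
    gcongr
  have : 0 ≤ sinh κ.im := (sinh_pos_iff.2 hκ).le
  rw [div_eq_mul_inv, norm_mul, norm_mul, norm_mul, Complex.norm_I, Complex.norm_two, mul_one]
  calc 2 * ‖(Complex.sin ((2 * m + 1) * κ))⁻¹‖ * ‖Complex.sin ((2 * m + 1) * x)‖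
    _ ≤ 2 * ((sinh κ.im)⁻¹ * rexp (-(2 * m * κ.im))) * rexp ((2 * m + 1) * (κ.im / 2)) := by
      gcongr
    _ = 2 * (sinh κ.im)⁻¹ * (rexp (-(2 * m * κ.im)) * rexp ((2 * m + 1) * (κ.im / 2))) := by ring
    _ = 2 * (sinh κ.im)⁻¹ * (rexp (κ.im / 2) * rexp (-(κ.im * m))) := by
      rw [← exp_add, ← exp_add]
      ring_nf
    _ = _ := (mul_assoc _ _ _).symm

theorem hasSum_iteratedDeriv_cscSum (hκ : 0 < κ.im) (α : ℂ) (N : ℕ) :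
    HasSum (fun m : ℕ => 2 * I / Complex.sin ((2 * m + 1) * κ) *
        ((2 * m + 1) * α) ^ (2 * N + 1) * (-1) ^ N)
      (iteratedDeriv (2 * N + 1) (fun u => cscSum κ (α * u - κ)) 0) := by
  have hU : IsOpen {u : ℂ | |(α * u).im| < κ.im / 2} :=
    isOpen_lt (by fun_prop) continuous_const
  have h0 : (0 : ℂ) ∈ {u : ℂ | |(α * u).im| < κ.im / 2} := by simpa using hκ
  have hexpand : (fun u => cscSum κ (α * u - κ)) =ᶠ[𝓝 0] fun u => ∑' m : ℕ,
      2 * I / Complex.sin ((2 * m + 1) * κ) * Complex.sin ((2 * m + 1) * (α * u)) := by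
    filter_upwards [hU.mem_nhds h0] with u hu
    exact cscSum_sub_half_period_eq_tsum hκ (hu.trans (half_lt_self hκ))
  rw [hexpand.iteratedDeriv_eq]
  refine (hasSum_iteratedDeriv_of_summable_norm ((summable_exp_neg_mul_nat hκ).mul_left _)
    (fun m => by fun_prop) hU (fun m u hu => norm_csc_mul_sin_odd_le hκ hu m) h0
    (2 * N + 1)).congr_fun fun m => ?_
  simp only [← mul_assoc (2 * (m : ℂ) + 1) α]
  rw [iteratedDeriv_const_mul_field, iteratedDeriv_comp_const_mul Complex.contDiff_sin,
    Complex.iteratedDeriv_odd_sin]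
  simp [mul_assoc]

end FourierExpansion

section MomentIntegral

variable {K L : ℝ}

theorem cos_add_cosh_pos (K : ℝ) (hL : L ≠ 0) (s : ℝ) : 0 < cos (K * s) + cosh (L * s) := by
  rcases eq_or_ne s 0 with rfl | hs
  · simp
  · linarith [one_lt_cosh.2 (mul_ne_zero hL hs), neg_one_le_cos (K * s)]

/-- `∫₀^∞ sⁿ / (cos (K s) + cosh (L s)) ds`, which is what the substitution `x = s²` turns
Kuznetsov's integrals into. -/
noncomputable def momentIntegral (K L : ℝ) (n : ℕ) : ℝ :=
  ∫ s in Ioi (0 : ℝ), s ^ n / (cos (K * s) + cosh (L * s))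

theorem integrableOn_pow_div_cos_add_cosh (K : ℝ) (hL : 0 < L) (n : ℕ) :
    IntegrableOn (fun s : ℝ => s ^ n / (cos (K * s) + cosh (L * s))) (Ioi 0) := by
  have hcont : Continuous fun s : ℝ => s ^ n / (cos (K * s) + cosh (L * s)) :=
    (continuous_pow n).div₀ (by fun_prop) fun s => (cos_add_cosh_pos K hL.ne' s).ne'
  refine integrable_of_isBigO_exp_neg (half_pos hL) hcont.continuousOn ?_
  obtain ⟨c, hc⟩ := (isLittleO_pow_exp_pos_mul_atTop n (half_pos hL)).isBigO.bound
  have hexp : ∀ᶠ s : ℝ in atTop, 4 ≤ rexp (L * s) :=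
    (tendsto_exp_atTop.comp (tendsto_id.const_mul_atTop hL)).eventually_ge_atTop 4
  refine Asymptotics.IsBigO.of_bound (4 * c) ?_
  filter_upwards [hc, hexp] with s hpow hs
  have hdenom : rexp (L * s) / 4 ≤ cos (K * s) + cosh (L * s) := by
    rw [cosh_eq]
    linarith [neg_one_le_cos (K * s), exp_pos (-(L * s))]
  rw [norm_of_nonneg (exp_nonneg _)] at hpow
  rw [norm_div, norm_of_nonneg (cos_add_cosh_pos K hL.ne' s).le, norm_of_nonneg (exp_nonneg _)]
  calc ‖s ^ n‖ / (cos (K * s) + cosh (L * s))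
    _ ≤ c * rexp (L / 2 * s) / (rexp (L * s) / 4) :=
      div_le_div₀ ((norm_nonneg _).trans hpow) hpow (by positivity) hdenom
    _ = 4 * c * rexp (-(L / 2) * s) := by
      rw [div_eq_iff (by positivity), mul_div_assoc', mul_assoc, ← exp_add]
      ring_nf

theorem momentIntegral_pos (K : ℝ) (hL : 0 < L) (n : ℕ) : 0 < momentIntegral K L n := by
  have hpos (s : ℝ) (hs : s ∈ Ioi 0) : 0 < s ^ n / (cos (K * s) + cosh (L * s)) :=
    div_pos (pow_pos hs n) (cos_add_cosh_pos K hL.ne' s)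
  rw [momentIntegral, setIntegral_pos_iff_support_of_nonneg_ae
    ((ae_restrict_mem measurableSet_Ioi).mono fun s hs => (hpos s hs).le)
    (integrableOn_pow_div_cos_add_cosh K hL n)]
  have : Ioi (0 : ℝ) ⊆ (Function.support fun s : ℝ => s ^ n / (cos (K * s) + cosh (L * s))) :=
    fun s hs => (hpos s hs).ne'
  rw [inter_eq_right.2 this, volume_Ioi]
  exact ENNReal.zero_lt_top

/-- The integrand of `momentIntegral` as a meromorphic function. -/
noncomputable def momentKernel (K L : ℝ) (n : ℕ) (z : ℂ) : ℂ :=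
  z ^ n / (Complex.cos (K * z) + Complex.cosh (L * z))

theorem momentKernel_ofReal (K L : ℝ) (n : ℕ) (s : ℝ) :
    momentKernel K L n s = ↑(s ^ n / (cos (K * s) + cosh (L * s))) := by
  rw [momentKernel]
  push_cast
  rfl

theorem momentKernel_mul_I (K L : ℝ) (n : ℕ) (z : ℂ) :
    momentKernel K L n (z * I) = I ^ n * momentKernel L K n z := by
  rw [momentKernel, momentKernel, ← mul_assoc, ← mul_assoc, Complex.cos_mul_I, Complex.cosh_mul_I,
    add_comm, mul_pow, mul_comm (z ^ n), mul_div_assoc]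

theorem cos_add_cosh_eq_mul (K L : ℝ) (z : ℂ) : Complex.cos (K * z) + Complex.cosh (L * z) =
    2 * Complex.cos (z * (K + L * I) / 2) * Complex.cos (z * (K - L * I) / 2) := by
  rw [← Complex.cos_mul_I, Complex.cos_add_cos]
  ring_nf

/-- The poles of `momentKernel K L n` in the first quadrant are the odd multiples of
`poleUnit K L`. -/
noncomputable def poleUnit (K L : ℝ) : ℂ := π / (K - L * I)

theorem sub_mul_I_ne_zero (hK : K ≠ 0) (L : ℝ) : (K - L * I : ℂ) ≠ 0 := fun h =>
  hK (by simpa using congrArg Complex.re h)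

theorem poleUnit_mul (hK : K ≠ 0) (L : ℝ) : poleUnit K L * (K - L * I) = π :=
  div_mul_cancel₀ _ (sub_mul_I_ne_zero hK L)

theorem poleUnit_re (K L : ℝ) : (poleUnit K L).re = π * K / (K ^ 2 + L ^ 2) := by
  rw [poleUnit, Complex.div_re, Complex.normSq_apply]
  simp [sq]

theorem poleUnit_im (K L : ℝ) : (poleUnit K L).im = π * L / (K ^ 2 + L ^ 2) := by
  rw [poleUnit, Complex.div_im, Complex.normSq_apply]
  simp [sq, neg_div]

theorem poleUnit_re_pos (hK : 0 < K) (L : ℝ) : 0 < (poleUnit K L).re := by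
  rw [poleUnit_re]
  positivity

theorem poleUnit_im_pos (hL : 0 < L) (K : ℝ) : 0 < (poleUnit K L).im := by
  rw [poleUnit_im]
  positivity

theorem poleUnit_mul_im_pos (hK : 0 < K) (hL : 0 < L) : 0 < (poleUnit K L * K).im := by
  rw [Complex.im_mul_ofReal]
  exact mul_pos (poleUnit_im_pos hL K) hK

theorem poleUnit_ne_zero (hK : 0 < K) (L : ℝ) : poleUnit K L ≠ 0 := fun h =>
  (poleUnit_re_pos hK L).ne' (by rw [h, Complex.zero_re])

theorem exists_eq_odd_mul_poleUnit_of_cos_add_cosh_eq_zero (hK : 0 < K) (hL : 0 < L) {z : ℂ}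
    (hre : 0 ≤ z.re) (him : 0 ≤ z.im) (hz : Complex.cos (K * z) + Complex.cosh (L * z) = 0) :
    ∃ m : ℕ, z = (2 * m + 1) * poleUnit K L := by
  rw [cos_add_cosh_eq_mul, mul_assoc, mul_eq_zero_iff_left two_ne_zero, mul_eq_zero] at hz
  rcases hz with hcos | hcos
  · obtain ⟨j, hj⟩ := Complex.cos_eq_zero_iff.1 hcos
    have him_eq : z.re * L + z.im * K = 0 := by
      simpa [mul_comm] using congrArg Complex.im hj
    have hre₀ : z.re = 0 := by nlinarith
    have him₀ : z.im = 0 := by nlinarith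
    simp [Complex.ext (z := z) (w := 0) hre₀ him₀] at hcos
  · obtain ⟨j, hj⟩ := Complex.cos_eq_zero_iff.1 hcos
    have hzj : z = (2 * j + 1) * poleUnit K L := by
      refine mul_right_cancel₀ (sub_mul_I_ne_zero hK.ne' L) ?_
      rw [mul_assoc, poleUnit_mul hK.ne']
      linear_combination 2 * hj
    have hj₀ : (0 : ℝ) ≤ 2 * j + 1 := by
      refine nonneg_of_mul_nonneg_left (hre.trans_eq ?_) (poleUnit_re_pos hK L)
      rw [hzj]
      simp
    have hj₁ : 0 ≤ 2 * j + 1 := mod_cast hj₀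
    lift j to ℕ using (by lia)
    exact ⟨j, mod_cast hzj⟩

theorem sin_odd_mul_poleUnit_ne_zero (hK : 0 < K) (hL : 0 < L) (m : ℕ) :
    Complex.sin (K * ((2 * m + 1) * poleUnit K L)) ≠ 0 := by
  refine sin_ne_zero_of_im_ne_zero ?_
  rw [Complex.im_ofReal_mul, im_odd_mul]
  have := poleUnit_im_pos hL K
  positivity

theorem cos_add_cosh_odd_mul_poleUnit (hK : K ≠ 0) (L : ℝ) (m : ℕ) :
    Complex.cos (K * ((2 * m + 1) * poleUnit K L)) +
      Complex.cosh (L * ((2 * m + 1) * poleUnit K L)) = 0 := by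
  have hcos : Complex.cos ((2 * m + 1) * poleUnit K L * (K - L * I) / 2) = 0 := by
    rw [mul_assoc, poleUnit_mul hK]
    exact Complex.cos_eq_zero_iff.2 ⟨m, by push_cast; rfl⟩
  rw [cos_add_cosh_eq_mul, hcos, mul_zero]

theorem sinh_odd_mul_poleUnit (hK : K ≠ 0) (L : ℝ) (m : ℕ) :
    Complex.sinh (L * ((2 * m + 1) * poleUnit K L)) =
      I * Complex.sin (K * ((2 * m + 1) * poleUnit K L)) := by
  have hshift : L * ((2 * m + 1) * poleUnit K L) * I =
      K * ((2 * m + 1) * poleUnit K L) - π - m * (2 * π) := by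
    linear_combination -(2 * m + 1) * poleUnit_mul hK L
  have hsin := Complex.sin_mul_I (L * ((2 * m + 1) * poleUnit K L))
  rw [hshift, Complex.sin_sub_nat_mul_two_pi, Complex.sin_sub_pi] at hsin
  linear_combination I * hsin + Complex.sinh (L * ((2 * m + 1) * poleUnit K L)) * Complex.I_sq

theorem hasDerivAt_cos_add_cosh_odd_mul_poleUnit (hK : K ≠ 0) (L : ℝ) (m : ℕ) :
    HasDerivAt (fun z => Complex.cos (K * z) + Complex.cosh (L * z))
      (-(K - L * I) * Complex.sin (K * ((2 * m + 1) * poleUnit K L)))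
      ((2 * m + 1) * poleUnit K L) := by
  have hderiv := ((hasDerivAt_id ((2 * m + 1) * poleUnit K L)).const_mul (K : ℂ)).ccos.add
    ((hasDerivAt_id ((2 * m + 1) * poleUnit K L)).const_mul (L : ℂ)).ccosh
  refine hderiv.congr_deriv ?_
  rw [id, sinh_odd_mul_poleUnit hK]
  ring

theorem tendsto_sub_mul_momentKernel (hK : 0 < K) (hL : 0 < L) (n m : ℕ) {s : ℂ}
    (hs : s = (2 * m + 1) * poleUnit K L) :
    Tendsto (fun u => (u - s) * momentKernel K L n u) (𝓝[≠] s)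
      (𝓝 (s ^ n * (-(K - L * I) * Complex.sin (K * s))⁻¹)) := by
  subst hs
  have hinv := (hasDerivAt_cos_add_cosh_odd_mul_poleUnit hK.ne' L m).tendsto_slope.inv₀
    (mul_ne_zero (neg_ne_zero.2 (sub_mul_I_ne_zero hK.ne' L))
      (sin_odd_mul_poleUnit_ne_zero hK hL m))
  refine (((continuous_pow n).tendsto _).mono_left nhdsWithin_le_nhds).mul hinv |>.congr fun u => ?_
  rw [slope_def_field, cos_add_cosh_odd_mul_poleUnit hK.ne', sub_zero, inv_div, momentKernel]
  ring

theorem odd_mul_poleUnit_injective (hK : 0 < K) (L : ℝ) :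
    Function.Injective fun m : ℕ => (2 * m + 1) * poleUnit K L := fun a b h => by
  have : (2 * a + 1 : ℂ) = 2 * b + 1 := mul_right_cancel₀ (poleUnit_ne_zero hK L) h
  have : 2 * a + 1 = 2 * b + 1 := mod_cast this
  lia

theorem even_mul_re (M : ℕ) (z : ℂ) : (2 * M * z).re = 2 * M * z.re := by
  simp

theorem even_mul_im (M : ℕ) (z : ℂ) : (2 * M * z).im = 2 * M * z.im := by
  simp

theorem odd_mul_re (m : ℕ) (z : ℂ) : ((2 * m + 1) * z).re = (2 * m + 1) * z.re := by
  simp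

theorem odd_mul_poleUnit_mem_interior (hK : 0 < K) (hL : 0 < L) {m M : ℕ} (h : m < M) :
    (2 * m + 1) * poleUnit K L ∈
      Ioo 0 (2 * M * poleUnit K L).re ×ℂ Ioo 0 (2 * M * poleUnit K L).im := by
  have hre := poleUnit_re_pos hK L
  have him := poleUnit_im_pos hL K
  have hlt : (2 * m + 1 : ℝ) < 2 * M := by
    have : 2 * m + 1 < 2 * M := by lia
    exact_mod_cast this
  rw [Complex.mem_reProdIm, even_mul_re, even_mul_im, im_odd_mul, odd_mul_re]
  exact ⟨⟨by positivity, by gcongr⟩, by positivity, by gcongr⟩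

theorem exists_lt_eq_odd_mul_poleUnit (hK : 0 < K) (hL : 0 < L) {M : ℕ} {z : ℂ}
    (hz : z ∈ (0 : ℂ).Rectangle (2 * M * poleUnit K L))
    (hz₀ : Complex.cos (K * z) + Complex.cosh (L * z) = 0) :
    ∃ m < M, (2 * m + 1) * poleUnit K L = z := by
  have hre := poleUnit_re_pos hK L
  have him := poleUnit_im_pos hL K
  rw [Complex.Rectangle, Complex.zero_re, Complex.zero_im, even_mul_re, even_mul_im,
    uIcc_of_le (by positivity), uIcc_of_le (by positivity)] at hz
  obtain ⟨m, rfl⟩ :=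
    exists_eq_odd_mul_poleUnit_of_cos_add_cosh_eq_zero hK hL hz.1.1 hz.2.1 hz₀
  have hle := hz.1.2
  rw [odd_mul_re, mul_le_mul_iff_left₀ hre] at hle
  have : 2 * m + 1 ≤ 2 * M := mod_cast hle
  exact ⟨m, by lia, rfl⟩

theorem rectIntegral_momentKernel (hK : 0 < K) (hL : 0 < L) (n M : ℕ) :
    rectIntegral (momentKernel K L n) 0 (2 * M * poleUnit K L) =
      ∑ m ∈ Finset.range M, -2 * I * poleUnit K L * ((2 * m + 1) * poleUnit K L) ^ n /
        Complex.sin (K * ((2 * m + 1) * poleUnit K L)) := by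
  classical
  have hinj := odd_mul_poleUnit_injective hK L
  rw [rectIntegral_eq_sum_residues
    ((Finset.range M).image fun m : ℕ => (2 * m + 1) * poleUnit K L)
    (c := fun s => s ^ n * (-(K - L * I) * Complex.sin (K * s))⁻¹) ?_ ?_ ?_,
    Finset.sum_image hinj.injOn, Finset.mul_sum]
  · refine Finset.sum_congr rfl fun m _ => ?_
    have := sub_mul_I_ne_zero hK.ne' L
    rw [mul_inv, inv_neg, mul_assoc (-2) I, poleUnit]
    ring
  · intro s hs
    obtain ⟨m, hm, rfl⟩ := Finset.mem_image.1 hs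
    exact odd_mul_poleUnit_mem_interior hK hL (Finset.mem_range.1 hm)
  · rintro z ⟨hz, hzS⟩
    refine (DifferentiableAt.div (by fun_prop) (by fun_prop) fun hz₀ =>
      hzS ?_).differentiableWithinAt
    obtain ⟨m, hm, hmz⟩ := exists_lt_eq_odd_mul_poleUnit hK hL hz hz₀
    exact Finset.mem_coe.2 (Finset.mem_image.2 ⟨m, Finset.mem_range.2 hm, hmz⟩)
  · intro s hs
    obtain ⟨m, -, hm⟩ := Finset.mem_image.1 hs
    exact tendsto_sub_mul_momentKernel hK hL n m hm.symm

theorem abs_sinh_im_le_norm_cos (z : ℂ) : |sinh z.im| ≤ ‖Complex.cos z‖ := by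
  simpa [Complex.sin_add_pi_div_two] using abs_sinh_im_le_norm_sin (z + π / 2)

theorem exists_pos_forall_le_norm_cos {ζ : ℂ} (hζ : ζ.im ≠ 0) :
    ∃ c > 0, ∀ t : ℝ, c ≤ ‖Complex.cos (t * ζ)‖ := by
  have hle (t : ℝ) : ‖t‖ * |ζ.im| ≤ ‖Complex.cos (t * ζ)‖ := calc
    ‖t‖ * |ζ.im| = |(t * ζ).im| := by rw [Complex.im_ofReal_mul, abs_mul, norm_eq_abs]
    _ ≤ |sinh (t * ζ).im| := by
      rw [abs_sinh]
      exact self_le_sinh_iff.2 (abs_nonneg _)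
    _ ≤ _ := abs_sinh_im_le_norm_cos _
  have hcont : Continuous fun t : ℝ => ‖Complex.cos (t * ζ)‖ := by fun_prop
  obtain ⟨t₀, ht₀⟩ := hcont.exists_forall_le (tendsto_atTop_mono hle
    ((tendsto_norm_cocompact_atTop).atTop_mul_const (abs_pos.2 hζ)))
  refine ⟨_, (norm_nonneg _).lt_of_ne fun hzero => ?_, ht₀⟩
  have ht₀_zero : t₀ = 0 := by
    have : ‖t₀‖ = 0 :=
      (nonpos_of_mul_nonpos_left ((hle t₀).trans_eq hzero.symm) (abs_pos.2 hζ)).antisymm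
        (norm_nonneg _)
    exact norm_eq_zero.1 this
  simp [ht₀_zero] at hzero

theorem tendsto_pow_div_sinh (n : ℕ) : Tendsto (fun x => x ^ n / sinh x) atTop (𝓝 0) := by
  have hexp := tendsto_exp_neg_atTop_nhds_zero
  have hdenom : Tendsto (fun x => (1 - rexp (-x) * rexp (-x)) / 2) atTop (𝓝 ((1 - 0 * 0) / 2)) :=
    (tendsto_const_nhds.sub (hexp.mul hexp)).div_const 2
  have hlim := (tendsto_pow_mul_exp_neg_atTop_nhds_zero n).div hdenom (by norm_num)
  rw [zero_div] at hlim
  refine hlim.congr fun x => ?_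
  have hsinh : sinh x = rexp x * ((1 - rexp (-x) * rexp (-x)) / 2) := by
    rw [sinh_eq, exp_neg]
    field_simp
  rw [hsinh, ← div_div, div_eq_mul_inv (x ^ n), ← exp_neg, Pi.div_apply]

theorem le_norm_cos_of_eq_sub_mul (hK : K ≠ 0) {c : ℝ} {d z : ℂ} {M : ℕ} {t : ℝ}
    (hc : ∀ t : ℝ, c ≤ ‖Complex.cos (t * (d * (K - L * I) / 2))‖)
    (hz : z = 2 * M * poleUnit K L - t * d) : c ≤ ‖Complex.cos (z * (K - L * I) / 2)‖ := by
  have hshift : z * (K - L * I) / 2 = M * π - t * (d * (K - L * I) / 2) := by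
    rw [hz]
    linear_combination M * poleUnit_mul hK L
  rw [hshift, Complex.cos_antiperiodic.nat_mul_sub_eq, Complex.cos_neg, norm_mul, norm_pow,
    norm_neg, norm_one, one_pow, one_mul]
  exact hc t

-- The corner `2Mπ / (K - iL)` lies midway between two consecutive poles, so along the far sides
-- of the rectangle the factor with the zeros stays bounded away from zero.
theorem exists_pos_le_norm_cos_far_side (hK : K ≠ 0) (hL : L ≠ 0) :
    ∃ c > 0, ∀ (M : ℕ) (z : ℂ),
      z.re = (2 * M * poleUnit K L).re ∨ z.im = (2 * M * poleUnit K L).im →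
        c ≤ ‖Complex.cos (z * (K - L * I) / 2)‖ := by
  obtain ⟨c, hc, hcos⟩ :=
    exists_pos_forall_le_norm_cos (ζ := 1 * (K - L * I) / 2) (by simpa using hL)
  obtain ⟨c', hc', hcos'⟩ :=
    exists_pos_forall_le_norm_cos (ζ := I * (K - L * I) / 2) (by simpa using hK)
  refine ⟨min c c', lt_min hc hc', fun M z hz => ?_⟩
  rcases hz with hre | him
  · refine (min_le_right _ _).trans (le_norm_cos_of_eq_sub_mul hK hcos' (M := M)
      (t := (2 * M * poleUnit K L).im - z.im) (Complex.ext ?_ ?_))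
    · simpa using hre
    · simp
  · refine (min_le_left _ _).trans (le_norm_cos_of_eq_sub_mul hK hcos (M := M)
      (t := (2 * M * poleUnit K L).re - z.re) (Complex.ext ?_ ?_))
    · simp
    · simpa using him

theorem norm_momentKernel_le {c t R : ℝ} {z : ℂ} (n : ℕ) (hc : 0 < c) (ht : 0 < t) (hz : ‖z‖ ≤ R)
    (hcos : c ≤ ‖Complex.cos (z * (K - L * I) / 2)‖) (htz : t ≤ (z.re * L + z.im * K) / 2) :
    ‖momentKernel K L n z‖ ≤ R ^ n / (2 * sinh t * c) := by
  have hsinh : sinh t ≤ ‖Complex.cos (z * (K + L * I) / 2)‖ := by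
    have him : (z * (K + L * I) / 2).im = (z.re * L + z.im * K) / 2 := by simp
    refine le_trans ?_ (abs_sinh_im_le_norm_cos _)
    rw [him]
    exact (sinh_le_sinh.2 htz).trans (le_abs_self _)
  have hR : 0 ≤ R := (norm_nonneg _).trans hz
  have : 0 < sinh t := sinh_pos_iff.2 ht
  rw [momentKernel, cos_add_cosh_eq_mul, norm_div, norm_pow, norm_mul, norm_mul, Complex.norm_two]
  gcongr

theorem norm_le_norm_of_mem_Icc {z w : ℂ} (hz : z ∈ Icc 0 w.re ×ℂ Icc 0 w.im) : ‖z‖ ≤ ‖w‖ := by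
  obtain ⟨⟨hre, hre'⟩, him, him'⟩ := hz
  rw [← abs_norm z, ← abs_norm w, ← sq_le_sq, Complex.sq_norm, Complex.sq_norm,
    Complex.normSq_apply, Complex.normSq_apply, ← sq, ← sq, ← sq, ← sq]
  gcongr

theorem tendsto_integral_momentKernel_far_side (hK : 0 < K) (hL : 0 < L) (n : ℕ) {τ : ℝ}
    {γ : ℕ → ℝ → ℂ} (hγ : ∀ M : ℕ, ∀ s ∈ uIoc 0 (M * τ),
      γ M s ∈ Icc 0 (2 * M * poleUnit K L).re ×ℂ Icc 0 (2 * M * poleUnit K L).im ∧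
        ((γ M s).re = (2 * M * poleUnit K L).re ∨ (γ M s).im = (2 * M * poleUnit K L).im)) :
    Tendsto (fun M : ℕ => ∫ s in (0 : ℝ)..M * τ, momentKernel K L n (γ M s)) atTop (𝓝 0) := by
  obtain ⟨c, hc, hcos⟩ := exists_pos_le_norm_cos_far_side hK.ne' hL.ne'
  set η := π * K * L / (K ^ 2 + L ^ 2) with hη
  have : 0 < η := by positivity
  have hbound : Tendsto (fun M : ℕ => ‖2 * M * poleUnit K L‖ ^ n / (2 * sinh (M * η) * c) *
      |M * τ - 0|) atTop (𝓝 0) := by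
    have hlim := ((tendsto_pow_div_sinh (n + 1)).comp
      (tendsto_natCast_atTop_atTop.atTop_mul_const this)).const_mul
        ((2 * ‖poleUnit K L‖) ^ n * |τ| / (2 * c * η ^ (n + 1)))
    rw [mul_zero] at hlim
    refine hlim.congr fun M => ?_
    rw [Function.comp_apply, sub_zero, abs_mul, Nat.abs_cast, norm_mul, norm_mul, Complex.norm_two,
      Complex.norm_natCast]
    field_simp
    ring
  refine squeeze_zero_norm' ?_ hbound
  filter_upwards [eventually_gt_atTop 0] with M hM
  refine intervalIntegral.norm_integral_le_of_norm_le_const fun s hs => ?_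
  obtain ⟨hmem, hfar⟩ := hγ M s hs
  refine norm_momentKernel_le n hc (by positivity) (norm_le_norm_of_mem_Icc hmem)
    (hcos M _ hfar) ?_
  rw [hη, le_div_iff₀ two_pos]
  rcases hfar with hre | him
  · rw [hre, even_mul_re, poleUnit_re]
    refine le_add_of_le_of_nonneg (le_of_eq (by ring)) (mul_nonneg hmem.2.1 hK.le)
  · rw [him, even_mul_im, poleUnit_im]
    refine le_add_of_nonneg_of_le (mul_nonneg hmem.1.1 hL.le) (le_of_eq (by ring))

theorem tendsto_integral_momentKernel_top (hK : 0 < K) (hL : 0 < L) (n : ℕ) :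
    Tendsto (fun M : ℕ => ∫ x in (0 : ℝ)..(2 * M * poleUnit K L).re,
      momentKernel K L n (x + (2 * M * poleUnit K L).im * I)) atTop (𝓝 0) := by
  have hre (M : ℕ) : (2 * M * poleUnit K L).re = M * (2 * (poleUnit K L).re) := by
    rw [even_mul_re]
    ring
  have hnonneg (M : ℕ) : 0 ≤ M * (2 * (poleUnit K L).re) := by
    have := poleUnit_re_pos hK L
    positivity
  have him (M : ℕ) : 0 ≤ (2 * M * poleUnit K L).im := by
    have := poleUnit_im_pos hL K
    rw [even_mul_im]
    positivity
  simp only [hre]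
  refine tendsto_integral_momentKernel_far_side hK hL n fun M x hx => ?_
  rw [uIoc_of_le (hnonneg M), ← hre] at hx
  rw [← Complex.mk_eq_add_mul_I]
  exact ⟨⟨⟨hx.1.le, hx.2⟩, him M, le_rfl⟩, .inr rfl⟩

theorem tendsto_integral_momentKernel_right (hK : 0 < K) (hL : 0 < L) (n : ℕ) :
    Tendsto (fun M : ℕ => ∫ y in (0 : ℝ)..(2 * M * poleUnit K L).im,
      momentKernel K L n ((2 * M * poleUnit K L).re + y * I)) atTop (𝓝 0) := by
  have him (M : ℕ) : (2 * M * poleUnit K L).im = M * (2 * (poleUnit K L).im) := by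
    rw [even_mul_im]
    ring
  have hnonneg (M : ℕ) : 0 ≤ M * (2 * (poleUnit K L).im) := by
    have := poleUnit_im_pos hL K
    positivity
  have hre (M : ℕ) : 0 ≤ (2 * M * poleUnit K L).re := by
    have := poleUnit_re_pos hK L
    rw [even_mul_re]
    positivity
  simp only [him]
  refine tendsto_integral_momentKernel_far_side hK hL n fun M y hy => ?_
  rw [uIoc_of_le (hnonneg M), ← him] at hy
  rw [← Complex.mk_eq_add_mul_I]
  exact ⟨⟨⟨hre M, le_rfl⟩, hy.1.le, hy.2⟩, .inl rfl⟩

/-- The combination of moment integrals collected by the contour integral of `momentKernel` along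
the positive real and imaginary axes; for `K = K(k)` and `L = K'(k)` it is Kuznetsov's `I_N⁺`. -/
noncomputable def moment (K L : ℝ) (N : ℕ) : ℝ :=
  momentIntegral K L (2 * N + 1) + (-1) ^ N * momentIntegral L K (2 * N + 1)

theorem tendsto_intervalIntegral_momentKernel (K : ℝ) (hL : 0 < L) (n : ℕ) {X : ℕ → ℝ}
    (hX : Tendsto X atTop atTop) :
    Tendsto (fun M => ∫ x in (0 : ℝ)..X M, momentKernel K L n x) atTop
      (𝓝 (momentIntegral K L n)) := by
  simp only [momentKernel_ofReal, intervalIntegral.integral_ofReal]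
  exact (intervalIntegral_tendsto_integral_Ioi 0
    (integrableOn_pow_div_cos_add_cosh K hL n) hX).ofReal

theorem tendsto_rectIntegral_momentKernel (hK : 0 < K) (hL : 0 < L) (N : ℕ) :
    Tendsto (fun M : ℕ => rectIntegral (momentKernel K L (2 * N + 1)) 0 (2 * M * poleUnit K L))
      atTop (𝓝 (moment K L N)) := by
  have htendsto {c : ℝ} (hc : 0 < c) : Tendsto (fun M : ℕ => 2 * M * c) atTop atTop :=
    (tendsto_natCast_atTop_atTop.const_mul_atTop two_pos).atTop_mul_const hc
  have hbottom := tendsto_intervalIntegral_momentKernel K hL (2 * N + 1)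
    (htendsto (poleUnit_re_pos hK L))
  have hleft := (tendsto_intervalIntegral_momentKernel L hK (2 * N + 1)
    (htendsto (poleUnit_im_pos hL K))).const_mul (I ^ (2 * N + 1))
  have hlim := ((hbottom.sub (tendsto_integral_momentKernel_top hK hL (2 * N + 1))).add
    ((tendsto_integral_momentKernel_right hK hL (2 * N + 1)).const_mul I)).sub (hleft.const_mul I)
  have hI : I * I ^ (2 * N + 1) = -(-1) ^ N := by
    rw [← pow_succ', add_assoc, pow_add, pow_mul, Complex.I_sq, mul_neg_one]
  convert hlim using 2 with M
  · simp only [rectIntegral, Complex.zero_re, Complex.zero_im, Complex.ofReal_zero, zero_mul,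
      add_zero, zero_add, momentKernel_mul_I, intervalIntegral.integral_const_mul, even_mul_re,
      even_mul_im]
  · rw [moment, ← mul_assoc, hI]
    push_cast
    ring

theorem moment_eq_iteratedDeriv_cscSum (hK : 0 < K) (hL : 0 < L) (N : ℕ) :
    (-1) ^ N * (moment K L N : ℂ) = -poleUnit K L * iteratedDeriv (2 * N + 1)
      (fun u => cscSum (poleUnit K L * K) (poleUnit K L * u - poleUnit K L * K)) 0 := by
  have hκ := poleUnit_mul_im_pos hK hL
  have hresidues := ((hasSum_iteratedDeriv_cscSum hκ (poleUnit K L) N).mul_left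
    (-poleUnit K L * (-1) ^ N)).tendsto_sum_nat
  have hmoment := tendsto_rectIntegral_momentKernel hK hL N
  simp only [rectIntegral_momentKernel hK hL] at hmoment
  have hsign : ((-1) ^ N * (-1) ^ N : ℂ) = 1 := by rw [← mul_pow, neg_mul_neg, mul_one, one_pow]
  have hunique := tendsto_nhds_unique hmoment (hresidues.congr fun M =>
    Finset.sum_congr rfl fun m _ => ?_)
  · rw [hunique, mul_assoc, mul_left_comm, ← mul_assoc ((-1) ^ N), hsign, one_mul]
  · rw [mul_left_comm (K : ℂ), mul_comm (K : ℂ)]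
    linear_combination (-2 * I * poleUnit K L * ((2 * m + 1) * poleUnit K L) ^ (2 * N + 1) /
      Complex.sin ((2 * m + 1) * (poleUnit K L * K))) * hsign

end MomentIntegral

section RealLine

variable {f : ℂ → ℂ} {T : ℝ}

theorem eventually_im_eq_zero_of_im_iteratedDeriv_eq_zero (hf : AnalyticAt ℂ f 0)
    (hreal : ∀ n, (iteratedDeriv n f 0).im = 0) : ∀ᶠ x : ℝ in 𝓝 0, (f x).im = 0 := by
  have htaylor := Complex.continuous_ofReal.tendsto' 0 0 Complex.ofReal_zero |>.eventually
    (hasFPowerSeriesAt_iff.1 hf.hasFPowerSeriesAt)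
  filter_upwards [htaylor] with x hx
  rw [zero_add] at hx
  refine (Complex.hasSum_im hx).unique (hasSum_zero.congr_fun fun n => ?_)
  rw [FormalMultilinearSeries.coeff_ofScalars, ← Complex.ofReal_pow, smul_eq_mul,
    Complex.im_ofReal_mul, Complex.div_natCast_im, hreal, zero_div, mul_zero]

theorem im_eq_zero_of_im_iteratedDeriv_eq_zero
    (hf : ∀ x ∈ Ioo (-T) T, AnalyticAt ℂ f (x : ℝ)) (hreal : ∀ n, (iteratedDeriv n f 0).im = 0)
    {x : ℝ} (hx : x ∈ Ioo (-T) T) : (f x).im = 0 := by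
  have h0 : (0 : ℝ) ∈ Ioo (-T) T := by constructor <;> linarith [hx.1, hx.2]
  have hanalytic : AnalyticOnNhd ℝ (fun x : ℝ => (f x).im) (Ioo (-T) T) := fun y hy =>
    (Complex.imCLM.analyticAt _).comp
      ((hf y hy).restrictScalars.comp_of_eq (Complex.ofRealCLM.analyticAt y) rfl)
  exact hanalytic.eqOn_zero_of_preconnected_of_eventuallyEq_zero isPreconnected_Ioo h0
    (eventually_im_eq_zero_of_im_iteratedDeriv_eq_zero (by simpa using hf 0 h0) hreal) hx

theorem deriv_sq_eq_of_deriv_deriv_eq {U : Set ℂ} (hU : IsOpen U) (hconn : IsPreconnected U)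
    (hf : AnalyticOnNhd ℂ f U) {b : ℂ}
    (hode : ∀ u ∈ U, deriv (deriv f) u = b * f u + 2 * f u ^ 3) {u₀ u : ℂ} (hu₀ : u₀ ∈ U)
    (h0 : f u₀ = 0) (hu : u ∈ U) :
    deriv f u ^ 2 = deriv f u₀ ^ 2 + b * f u ^ 2 + f u ^ 4 := by
  have hconst : ∀ u ∈ U, HasDerivAt (fun u => deriv f u ^ 2 - b * f u ^ 2 - f u ^ 4) 0 u := by
    intro u hu
    have hd := (hf u hu).differentiableAt.hasDerivAt
    have hdd := (hf u hu).deriv.differentiableAt.hasDerivAt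
    refine (((hdd.pow 2).sub ((hd.pow 2).const_mul b)).sub (hd.pow 4)).congr_deriv ?_
    rw [hode u hu]
    push_cast
    ring
  have heq := hU.is_const_of_deriv_eq_zero hconn
    (fun u hu => (hconst u hu).differentiableAt.differentiableWithinAt)
    (fun u hu => (hconst u hu).deriv) hu hu₀
  simp only [h0] at heq
  linear_combination heq

theorem tendsto_re_atTop_of_tendsto_sub_mul {g : ℝ → ℂ}
    (hg : Tendsto (fun x => (T - x) * g x) (𝓝[<] T) (𝓝 1)) :
    Tendsto (fun x => (g x).re) (𝓝[<] T) atTop := by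
  have hinv : Tendsto (fun x : ℝ => (T - x)⁻¹) (𝓝[<] T) atTop :=
    tendsto_inv_nhdsGT_zero.comp <| tendsto_nhdsWithin_iff.2
      ⟨((continuous_const.sub continuous_id).tendsto' T 0 (sub_self T)).mono_left
        nhdsWithin_le_nhds, eventually_mem_nhdsWithin.mono fun x hx =>
        mem_Ioi.2 (sub_pos.2 hx)⟩
  have hre := (Complex.continuous_re.tendsto 1).comp hg
  refine (hinv.atTop_mul_pos one_pos hre).congr' ?_
  filter_upwards [self_mem_nhdsWithin] with x hx
  rw [Function.comp_apply, ← Complex.ofReal_sub, Complex.re_ofReal_mul,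
    inv_mul_cancel_left₀ (sub_pos.2 hx).ne']

theorem isBlowup_re_of_analyticAt {b : ℝ} (hf : ∀ x ∈ Ioo (-T) T, AnalyticAt ℂ f (x : ℝ))
    (hreal : ∀ n, (iteratedDeriv n f 0).im = 0) (h0 : f 0 = 0) (h1 : 0 < (deriv f 0).re)
    (henergy : ∀ x : ℝ, x ∈ Ico 0 T → deriv f x ^ 2 = deriv f 0 ^ 2 + b * f x ^ 2 + f x ^ 4)
    (hpole : Tendsto (fun x : ℝ => (T - x) * f x) (𝓝[<] T) (𝓝 1)) :
    IsBlowup b T (fun x => (f x).re) fun x => (deriv f x).re := by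
  have hmem {x : ℝ} (hx : x ∈ Ico 0 T) : x ∈ Ioo (-T) T := ⟨by linarith [hx.1, hx.2], hx.2⟩
  have hf_eq {x : ℝ} (hx : x ∈ Ico 0 T) : f x = (f x).re :=
    Complex.ext rfl (im_eq_zero_of_im_iteratedDeriv_eq_zero hf hreal (hmem hx))
  have hderiv_eq {x : ℝ} (hx : x ∈ Ico 0 T) : deriv f x = (deriv f x).re :=
    Complex.ext rfl (im_eq_zero_of_im_iteratedDeriv_eq_zero (fun y hy => (hf y hy).deriv)
      (fun n => by rw [← iteratedDeriv_succ', hreal]) (hmem hx))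
  have hderiv_zero : deriv f 0 = (deriv f 0).re :=
    Complex.ext rfl (by rw [← iteratedDeriv_one, hreal, Complex.ofReal_im])
  refine ⟨fun x hx => (hf x (hmem hx)).differentiableAt.hasDerivAt.real_of_complex, fun x hx =>
    (hf x (hmem hx)).deriv.differentiableAt.hasDerivAt.real_of_complex.continuousAt
      |>.continuousWithinAt, ?_, ?_, fun x hx => ?_, tendsto_re_atTop_of_tendsto_sub_mul hpole⟩
  · rw [Complex.ofReal_zero, h0, Complex.zero_re]
  · rwa [Complex.ofReal_zero]
  · have := henergy x hx
    rw [hderiv_zero, hderiv_eq hx, hf_eq hx] at this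
    rw [Complex.ofReal_zero]
    exact_mod_cast this

theorem iteratedDeriv_comp_const_mul_field (n : ℕ) (c : ℂ) (f : ℂ → ℂ) (u : ℂ) :
    iteratedDeriv n (fun u => f (c * u)) u = c ^ n * iteratedDeriv n f (c * u) := by
  induction n generalizing u with
  | zero => simp
  | succ n ih =>
    rw [iteratedDeriv_succ, funext ih, iteratedDeriv_succ, deriv_const_mul_field,
      deriv_comp_mul_left, smul_eq_mul, pow_succ, mul_assoc]

end RealLine

section MomentGeneratingFunction

variable {K L : ℝ}

/-- The function with Taylor coefficients `(-1)ᴺ moment K L N / (2N+1)!` at `0`. It has simple poles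
of residue `-1` at `K` and `1` at `iL`, and is analytic on the segments from `0` to these points. -/
noncomputable def momentGen (K L : ℝ) (u : ℂ) : ℂ :=
  -poleUnit K L * cscSum (poleUnit K L * K) (poleUnit K L * u - poleUnit K L * K)

theorem iteratedDeriv_odd_momentGen (hK : 0 < K) (hL : 0 < L) (N : ℕ) :
    iteratedDeriv (2 * N + 1) (momentGen K L) 0 = ↑((-1) ^ N * moment K L N) := by
  push_cast
  rw [moment_eq_iteratedDeriv_cscSum hK hL, ← iteratedDeriv_const_mul_field]
  rfl

theorem odd_momentGen (K L : ℝ) : Function.Odd (momentGen K L) := fun u => by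
  rw [momentGen, momentGen, mul_neg, ← neg_add', odd_cscSum, ← mul_neg,
    ← (periodic_cscSum _).sub_eq]
  ring_nf

theorem iteratedDeriv_even_momentGen (K L : ℝ) (N : ℕ) :
    iteratedDeriv (2 * N) (momentGen K L) 0 = 0 :=
  iteratedDeriv_apply_zero_of_odd (odd_momentGen K L) (even_two_mul N)

theorem momentGen_zero (K L : ℝ) : momentGen K L 0 = 0 :=
  iteratedDeriv_even_momentGen K L 0

theorem deriv_momentGen_zero (hK : 0 < K) (hL : 0 < L) :
    deriv (momentGen K L) 0 = moment K L 0 := by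
  simpa [iteratedDeriv_one] using iteratedDeriv_odd_momentGen hK hL 0

theorem moment_zero_pos (hK : 0 < K) (hL : 0 < L) : 0 < moment K L 0 := by
  rw [moment, pow_zero, one_mul]
  exact add_pos (momentIntegral_pos K hL _) (momentIntegral_pos L hK _)

/-- The strip around the line through `0` and `K - iL` on which `momentGen K L` has no poles. -/
def poleFreeStrip (K L : ℝ) : Set ℂ :=
  {u | |(poleUnit K L * u).im| < (poleUnit K L * K).im}

theorem mem_poleFreeStrip {u : ℂ} :
    u ∈ poleFreeStrip K L ↔ |(poleUnit K L * u).im| < (poleUnit K L * K).im :=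
  Iff.rfl

theorem isOpen_poleFreeStrip (K L : ℝ) : IsOpen (poleFreeStrip K L) :=
  isOpen_lt (by fun_prop) continuous_const

theorem isPreconnected_poleFreeStrip (K L : ℝ) : IsPreconnected (poleFreeStrip K L) := by
  have hpreimage : poleFreeStrip K L = (Complex.imLm ∘ₗ LinearMap.mulLeft ℝ (poleUnit K L)) ⁻¹'
      Ioo (-(poleUnit K L * K).im) (poleUnit K L * K).im := by
    ext u
    exact mem_poleFreeStrip.trans abs_lt
  rw [hpreimage]
  exact ((convex_Ioo _ _).linear_preimage _).isPreconnected

theorem zero_mem_poleFreeStrip (hK : 0 < K) (hL : 0 < L) : 0 ∈ poleFreeStrip K L := by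
  simpa [mem_poleFreeStrip] using poleUnit_mul_im_pos hK hL

theorem ofReal_mem_poleFreeStrip (K : ℝ) (hL : 0 < L) {x : ℝ} (hx : x ∈ Ioo (-K) K) :
    (x : ℂ) ∈ poleFreeStrip K L := by
  have := poleUnit_im_pos hL K
  rw [mem_poleFreeStrip, Complex.im_mul_ofReal, Complex.im_mul_ofReal, abs_mul,
    abs_of_pos this]
  gcongr
  exact abs_lt.2 hx

theorem I_mul_ofReal_mem_poleFreeStrip (hK : 0 < K) (L : ℝ) {x : ℝ} (hx : x ∈ Ioo (-L) L) :
    I * x ∈ poleFreeStrip K L := by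
  have := poleUnit_re_pos hK L
  rw [mem_poleFreeStrip, ← mul_assoc, Complex.im_mul_ofReal, Complex.mul_I_im,
    Complex.im_mul_ofReal, abs_mul, abs_of_pos this]
  calc (poleUnit K L).re * |x|
    _ < (poleUnit K L).re * L := by
      gcongr
      exact abs_lt.2 hx
    _ = (poleUnit K L).im * K := by
      rw [poleUnit_re, poleUnit_im]
      ring

theorem analyticOnNhd_momentGen (hK : 0 < K) (hL : 0 < L) :
    AnalyticOnNhd ℂ (momentGen K L) (poleFreeStrip K L) := fun u hu => by
  have hκ := poleUnit_mul_im_pos hK hL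
  obtain ⟨hlower, hupper⟩ := abs_lt.1 (mem_poleFreeStrip.1 hu)
  have him : (poleUnit K L * u - poleUnit K L * K).im < 0 := by
    rw [Complex.sub_im]
    linarith
  have hlt : |(poleUnit K L * u - poleUnit K L * K).im| < 2 * (poleUnit K L * K).im := by
    rw [abs_of_neg him, Complex.sub_im]
    linarith
  have haffine : AnalyticAt ℂ (fun u => poleUnit K L * u - poleUnit K L * K) u := by fun_prop
  exact analyticAt_const.mul
    ((analyticAt_cscSum hκ hlt (sin_ne_zero_of_im_ne_zero him.ne)).comp_of_eq haffine rfl)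

theorem analyticAt_momentGen_zero (hK : 0 < K) (hL : 0 < L) : AnalyticAt ℂ (momentGen K L) 0 :=
  analyticOnNhd_momentGen hK hL 0 (zero_mem_poleFreeStrip hK hL)

theorem deriv_deriv_momentGen (K L : ℝ) (u : ℂ) :
    deriv (deriv (momentGen K L)) u = -poleUnit K L ^ 3 *
      deriv (deriv (cscSum (poleUnit K L * K))) (poleUnit K L * u - poleUnit K L * K) := by
  have htwo (f : ℂ → ℂ) : deriv (deriv f) = iteratedDeriv 2 f := by
    rw [iteratedDeriv_succ, iteratedDeriv_one]
  have hscale := iteratedDeriv_comp_const_mul_field 2 (poleUnit K L)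
    (fun w => cscSum (poleUnit K L * K) (w - poleUnit K L * K)) u
  rw [htwo, htwo]
  unfold momentGen
  rw [iteratedDeriv_const_mul_field, hscale, iteratedDeriv_comp_sub_const]
  ring

-- Differentiating the equation at `0` gives `F'''(0) = B F'(0)`, which shows that `B` is real.
theorem exists_deriv_deriv_momentGen_eq (hK : 0 < K) (hL : 0 < L) :
    ∃ b : ℝ, ∀ u, deriv (deriv (momentGen K L)) u =
      b * momentGen K L u + 2 * momentGen K L u ^ 3 := by
  obtain ⟨B, hB⟩ := exists_deriv_deriv_cscSum_eq (poleUnit_mul_im_pos hK hL)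
  have hode (u : ℂ) : deriv (deriv (momentGen K L)) u =
      poleUnit K L ^ 2 * B * momentGen K L u + 2 * momentGen K L u ^ 3 := by
    rw [deriv_deriv_momentGen, hB, momentGen]
    ring
  have hthird : iteratedDeriv 3 (momentGen K L) 0 =
      poleUnit K L ^ 2 * B * deriv (momentGen K L) 0 := by
    have hd := (analyticAt_momentGen_zero hK hL).differentiableAt.hasDerivAt
    rw [iteratedDeriv_succ, iteratedDeriv_succ, iteratedDeriv_one, funext hode]
    refine ((hd.const_mul _).add ((hd.pow 3).const_mul 2)).deriv.trans ?_
    simp [momentGen_zero]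
  have hne : (moment K L 0 : ℂ) ≠ 0 := Complex.ofReal_ne_zero.2 (moment_zero_pos hK hL).ne'
  rw [deriv_momentGen_zero hK hL, iteratedDeriv_odd_momentGen hK hL 1, ← div_eq_iff hne] at hthird
  refine ⟨(-1) ^ 1 * moment K L 1 / moment K L 0, fun u => ?_⟩
  rw [hode, Complex.ofReal_div, hthird]

theorem tendsto_mul_cscSum {κ : ℂ} (hκ : 0 < κ.im) :
    Tendsto (fun v => v * cscSum κ v) (𝓝[≠] 0) (𝓝 1) := by
  have h0 : |(0 : ℂ).im| < 2 * κ.im := by simpa using hκ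
  have hsin : Tendsto (fun v : ℂ => v / Complex.sin v) (𝓝[≠] 0) (𝓝 1) := by
    have := (hasDerivAt_iff_tendsto_slope.1 (Complex.hasDerivAt_sin 0)).inv₀ (by simp)
    simpa [slope_fun_def_field] using this
  have hregular : Tendsto (fun v : ℂ => v * cscSumRegular κ v) (𝓝[≠] 0) (𝓝 0) := by
    have := (continuousAt_id.mul (analyticAt_cscSumRegular hκ h0).continuousAt).tendsto
    simpa [Pi.mul_def] using this.mono_left nhdsWithin_le_nhds
  have hsum := hsin.add hregular
  rw [add_zero] at hsum
  refine hsum.congr' ?_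
  filter_upwards [(cscSum_eventuallyEq hκ h0).filter_mono nhdsWithin_le_nhds] with v hv
  rw [hv, mul_add, div_eq_mul_inv]

theorem tendsto_mul_cscSum_poleUnit_mul_sub (hK : 0 < K) (hL : 0 < L) {γ : ℝ → ℂ} {γ' : ℂ} {T : ℝ}
    (hγ : HasDerivAt γ γ' T) (hγ' : γ' ≠ 0) :
    Tendsto (fun x => poleUnit K L * (γ x - γ T) *
      cscSum (poleUnit K L * K) (poleUnit K L * (γ x - γ T))) (𝓝[<] T) (𝓝 1) := by
  have hpath := ((hγ.sub_const (γ T)).const_mul (poleUnit K L)).tendsto_nhdsNE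
    (mul_ne_zero (poleUnit_ne_zero hK L) hγ')
  rw [sub_self, mul_zero] at hpath
  exact ((tendsto_mul_cscSum (poleUnit_mul_im_pos hK hL)).comp hpath).mono_left
    (nhdsLT_le_nhdsNE T)

theorem tendsto_sub_mul_momentGen (hK : 0 < K) (hL : 0 < L) :
    Tendsto (fun x : ℝ => (K - x) * momentGen K L x) (𝓝[<] K) (𝓝 1) := by
  refine (tendsto_mul_cscSum_poleUnit_mul_sub hK hL (γ := fun x => x)
    Complex.ofRealCLM.hasDerivAt (by simp)).congr fun x => ?_
  rw [momentGen, ← mul_sub]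
  ring

-- The pole at `iL` is a translate of the one at `K`, since `poleUnit K L * (K - iL) = π`.
theorem tendsto_sub_mul_neg_I_mul_momentGen (hK : 0 < K) (hL : 0 < L) :
    Tendsto (fun x : ℝ => (L - x) * (-I * momentGen K L (I * x))) (𝓝[<] L) (𝓝 1) := by
  refine (tendsto_mul_cscSum_poleUnit_mul_sub hK hL (γ := fun x => I * x)
    (Complex.ofRealCLM.hasDerivAt.const_mul I) (by simp)).congr fun x => ?_
  have harg : poleUnit K L * (I * x - I * L) = poleUnit K L * (I * x) - poleUnit K L * K + π := by
    rw [← poleUnit_mul hK.ne' L]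
    ring
  rw [momentGen, harg, antiperiodic_cscSum, ← harg]
  ring

theorem deriv_momentGen_sq (hK : 0 < K) (hL : 0 < L) {b : ℂ}
    (hode : ∀ u, deriv (deriv (momentGen K L)) u = b * momentGen K L u + 2 * momentGen K L u ^ 3)
    {u : ℂ} (hu : u ∈ poleFreeStrip K L) : deriv (momentGen K L) u ^ 2 =
      deriv (momentGen K L) 0 ^ 2 + b * momentGen K L u ^ 2 + momentGen K L u ^ 4 :=
  deriv_sq_eq_of_deriv_deriv_eq (isOpen_poleFreeStrip K L) (isPreconnected_poleFreeStrip K L)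
    (analyticOnNhd_momentGen hK hL) (fun u _ => hode u)
    (zero_mem_poleFreeStrip hK hL) (momentGen_zero K L) hu

theorem iteratedDeriv_momentGen_zero_im (hK : 0 < K) (hL : 0 < L) (n : ℕ) :
    (iteratedDeriv n (momentGen K L) 0).im = 0 := by
  obtain ⟨N, rfl | rfl⟩ := n.even_or_odd'
  · rw [iteratedDeriv_even_momentGen, Complex.zero_im]
  · rw [iteratedDeriv_odd_momentGen hK hL, Complex.ofReal_im]

theorem isBlowup_momentGen (hK : 0 < K) (hL : 0 < L) {b : ℝ}
    (hode : ∀ u, deriv (deriv (momentGen K L)) u = b * momentGen K L u + 2 * momentGen K L u ^ 3) :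
    IsBlowup b K (fun x => (momentGen K L x).re) fun x => (deriv (momentGen K L) x).re := by
  refine isBlowup_re_of_analyticAt
    (fun x hx => analyticOnNhd_momentGen hK hL x (ofReal_mem_poleFreeStrip K hL hx))
    (iteratedDeriv_momentGen_zero_im hK hL) (momentGen_zero K L) ?_
    (fun x hx => deriv_momentGen_sq hK hL hode
      (ofReal_mem_poleFreeStrip K hL ⟨by linarith [hx.1, hx.2], hx.2⟩))
    (tendsto_sub_mul_momentGen hK hL)
  rw [deriv_momentGen_zero hK hL]
  exact moment_zero_pos hK hL

theorem iteratedDeriv_neg_I_mul_momentGen_zero_im (hK : 0 < K) (hL : 0 < L) (n : ℕ) :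
    (iteratedDeriv n (fun u => -I * momentGen K L (I * u)) 0).im = 0 := by
  rw [iteratedDeriv_const_mul_field, iteratedDeriv_comp_const_mul_field, mul_zero]
  obtain ⟨N, rfl | rfl⟩ := n.even_or_odd'
  · rw [iteratedDeriv_even_momentGen, mul_zero, mul_zero, Complex.zero_im]
  · have hI : -I * I ^ (2 * N + 1) = ↑((-1 : ℝ) ^ N) := by
      push_cast
      rw [pow_succ', ← mul_assoc, neg_mul, Complex.I_mul_I, neg_neg, one_mul, pow_mul, Complex.I_sq]
    rw [iteratedDeriv_odd_momentGen hK hL, ← mul_assoc, hI, ← Complex.ofReal_mul, Complex.ofReal_im]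

theorem isBlowup_neg_I_mul_momentGen (hK : 0 < K) (hL : 0 < L) {b : ℝ}
    (hode : ∀ u, deriv (deriv (momentGen K L)) u = b * momentGen K L u + 2 * momentGen K L u ^ 3) :
    IsBlowup (-b) L (fun x => (-I * momentGen K L (I * x)).re)
      fun x => (deriv (momentGen K L) (I * x)).re := by
  have hderiv (u : ℂ) : deriv (fun u => -I * momentGen K L (I * u)) u =
      deriv (momentGen K L) (I * u) := by
    rw [deriv_const_mul_field, deriv_comp_mul_left, smul_eq_mul, ← mul_assoc, neg_mul,
      Complex.I_mul_I, neg_neg, one_mul]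
  have h := isBlowup_re_of_analyticAt (f := fun u => -I * momentGen K L (I * u)) (b := -b)
    (fun x hx => analyticAt_const.mul
      ((analyticOnNhd_momentGen hK hL _ (I_mul_ofReal_mem_poleFreeStrip hK L hx)).comp_of_eq
        (by fun_prop) rfl))
    (iteratedDeriv_neg_I_mul_momentGen_zero_im hK hL) (by rw [mul_zero, momentGen_zero, mul_zero])
    (by
      rw [hderiv, mul_zero, deriv_momentGen_zero hK hL]
      exact moment_zero_pos hK hL)
    (fun x hx => by
      have hmem := I_mul_ofReal_mem_poleFreeStrip hK L (x := x) ⟨by linarith [hx.1, hx.2], hx.2⟩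
      rw [hderiv, hderiv, mul_zero, deriv_momentGen_sq hK hL hode hmem, mul_pow, mul_pow, neg_sq,
        Complex.I_sq, neg_pow, Complex.I_pow_four]
      push_cast
      ring)
    (tendsto_sub_mul_neg_I_mul_momentGen hK hL)
  simpa only [hderiv] using h

end MomentGeneratingFunction

section KuznetsovMoments

variable {k : ℝ}

theorem half_mul_integral_comp_sqrt (n : ℕ) (D : ℝ → ℝ) :
    1 / 2 * ∫ x in Ioi (0 : ℝ), x ^ n / D √x = ∫ s in Ioi (0 : ℝ), s ^ (2 * n + 1) / D s := by
  rw [← integral_comp_rpow_Ioi_of_pos two_pos, ← integral_const_mul]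
  refine setIntegral_congr_fun measurableSet_Ioi fun s hs => ?_
  have hexponent : (2 : ℝ) - 1 = 1 := by norm_num
  rw [hexponent, rpow_one, rpow_two, sqrt_sq (mem_Ioi.1 hs).le, smul_eq_mul]
  ring

theorem Iplus_eq_moment (k : ℝ) (n : ℕ) :
    Iplus k n = moment (ellipticK k) (ellipticK √(1 - k ^ 2)) n := by
  have hsubst := half_mul_integral_comp_sqrt n
  rw [Iplus, moment, momentIntegral, momentIntegral, ← hsubst fun s => cos _ + cosh _,
    ← hsubst fun s => cos _ + cosh _]
  simp only [add_comm (cosh _)]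
  ring

theorem momentGen_ellipticK (hk : k ∈ Ioo (0 : ℝ) 1) :
    deriv (momentGen (ellipticK k) (ellipticK √(1 - k ^ 2))) 0 = 1 ∧
      ∀ u, deriv (deriv (momentGen (ellipticK k) (ellipticK √(1 - k ^ 2)))) u =
        2 * (1 - 2 * k ^ 2) * momentGen (ellipticK k) (ellipticK √(1 - k ^ 2)) u +
          2 * momentGen (ellipticK k) (ellipticK √(1 - k ^ 2)) u ^ 3 := by
  have hK := ellipticK_pos (pow_lt_one₀ hk.1.le hk.2 two_ne_zero)
  have hL := ellipticK_pos (complementary_modulus_sq_lt_one hk.1.ne')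
  obtain ⟨b, hode⟩ := exists_deriv_deriv_momentGen_eq hK hL
  obtain ⟨hslope, rfl⟩ := IsBlowup.slope_eq_one_and_coeff_eq hk (isBlowup_momentGen hK hL hode)
    (isBlowup_neg_I_mul_momentGen hK hL hode) (by simp only [Complex.ofReal_zero, mul_zero])
  refine ⟨?_, fun u => by simpa using hode u⟩
  rw [Complex.ofReal_zero, deriv_momentGen_zero hK hL, Complex.ofReal_re] at hslope
  rw [deriv_momentGen_zero hK hL, hslope, Complex.ofReal_one]

end KuznetsovMoments

theorem Iplus_mod_ten_rational_modulus_general {k : ℝ} (hk : k ∈ Ioo (0 : ℝ) 1) {p q : ℤ}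
    (hpq : q * (4 * (k ^ 4 - k ^ 2 + 1)) = p) (n : ℕ) :
    ∃ a : ℤ, q ^ n * Iplus k (2 * n) = a ∧ a ≡ (4 * p) ^ n [ZMOD 10] := by
  have hK := ellipticK_pos (pow_lt_one₀ hk.1.le hk.2 two_ne_zero)
  have hL := ellipticK_pos (complementary_modulus_sq_lt_one hk.1.ne')
  obtain ⟨h1, hode⟩ := momentGen_ellipticK hk
  have henergy := fun u hu => deriv_momentGen_sq hK hL (b := 2 * (1 - 2 * k ^ 2)) hode (u := u) hu
  have hlam : (q : ℂ) * (1 - 2 * k ^ 2) ^ 2 = p - 3 * q := by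
    have hpq' : (q : ℂ) * (4 * (k ^ 4 - k ^ 2 + 1)) = p := mod_cast congrArg Complex.ofReal hpq
    linear_combination hpq'
  obtain ⟨a, ha, hmod⟩ := (isRowModTen_iteratedDeriv (analyticAt_momentGen_zero hK hL)
    (momentGen_zero _ _) h1 (.of_forall hode) (by
      filter_upwards [(isOpen_poleFreeStrip _ _).mem_nhds (zero_mem_poleFreeStrip hK hL)] with u hu
      rw [henergy u hu, h1, one_pow]) hlam n).zero
  refine ⟨a, ?_, hmod⟩
  have hmoment : iteratedDeriv (4 * n + 1)
      (momentGen (ellipticK k) (ellipticK √(1 - k ^ 2))) 0 = Iplus k (2 * n) := by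
    rw [show 4 * n + 1 = 2 * (2 * n) + 1 by ring, iteratedDeriv_odd_momentGen hK hL,
      ← Iplus_eq_moment, (even_two_mul n).neg_one_pow, one_mul]
  simp only [mul_zero, zero_add, pow_one, hmoment] at ha
  exact_mod_cast ha

theorem Iplus_mod_ten_rational_modulus (k : ℝ) (hk : k ∈ Set.Ioo (0 : ℝ) 1)
    (p q : ℕ) (hp : 0 < p) (hq : 0 < q) (hpq : Nat.Coprime p q)
    (hk2 : 4 * (k ^ 4 - k ^ 2 + 1) = (p : ℝ) / (q : ℝ)) :
    ∀ n : ℕ, ∃ a : ℤ, (q : ℝ) ^ n * Iplus k (2 * n) = (a : ℝ) ∧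
      a ≡ (4 * (p : ℤ)) ^ n [ZMOD 10] := by
  have hmul : ((q : ℤ) : ℝ) * (4 * (k ^ 4 - k ^ 2 + 1)) = (p : ℤ) := by
    rw [hk2, Int.cast_natCast, Int.cast_natCast]
    field_simp
  exact fun n => mod_cast Iplus_mod_ten_rational_modulus_general hk hmul n
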